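/- Let λ and μ be gl_n-highest weights (with arbitrary complex entries). Suppose the Y(gl_n)-module L(λ)⊗L(μ) is irreducible. Then for each pair of indices 1 ≤ i < j ≤ n one has: either (m_j ∉ ⟨l_j, l_i⟩ and m_i ∉ ⟨l_j, l_i⟩) or (l_j ∉ ⟨m_j, m_i⟩ and l_i ∉ ⟨m_j, m_i⟩). -/

import Mathlib

open scoped TensorProduct

/-- An `n`-tuple of complex numbers is a `gl_n`-highest weight if the consecutive
differences `λ_i - λ_{i+1}` are non-negative integers. -/
def IsGLHighestWeight (n : ℕ) (lam : Fin n → ℂ) : Prop :=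
  ∀ i : Fin n, ∀ h : (i : ℕ) + 1 < n, ∃ N : ℕ, lam i - lam ⟨(i : ℕ) + 1, h⟩ = N

/-- A realization of the irreducible finite-dimensional `gl_n`-module `L(λ)`
with highest weight `lam`, given by the action of the matrix units `E i j`. -/
structure GLRep (n : ℕ) (lam : Fin n → ℂ) where
  V : Type
  [instAddCommGroup : AddCommGroup V]
  [instModule : Module ℂ V]
  [instFiniteDimensional : FiniteDimensional ℂ V]
  E : Fin n → Fin n → (V →ₗ[ℂ] V)
  commRel : ∀ i j k l : Fin n,
    E i j ∘ₗ E k l - E k l ∘ₗ E i j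
      = (if j = k then E i l else 0) - (if l = i then E k j else 0)
  hv : V
  hv_ne : hv ≠ 0
  hv_upper : ∀ i j : Fin n, i < j → E i j hv = 0
  hv_diag : ∀ i : Fin n, E i i hv = lam i • hv
  irreducible : ∀ U : Submodule ℂ V,
    (∀ i j : Fin n, ∀ v ∈ U, E i j v ∈ U) → U = ⊥ ∨ U = ⊤

attribute [instance] GLRep.instAddCommGroup GLRep.instModule GLRep.instFiniteDimensional

/-- The action of the Yangian generator `t_{ij}^{(1)}` on `L(λ) ⊗ L(μ)`
(both evaluation modules evaluated at `0`). -/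
noncomputable def t1 {n : ℕ} {lam mu : Fin n → ℂ} (A : GLRep n lam) (B : GLRep n mu)
    (i j : Fin n) : A.V ⊗[ℂ] B.V →ₗ[ℂ] A.V ⊗[ℂ] B.V :=
  TensorProduct.map (A.E i j) LinearMap.id + TensorProduct.map LinearMap.id (B.E i j)

/-- The action of the Yangian generator `t_{ij}^{(2)}` on `L(λ) ⊗ L(μ)`. -/
noncomputable def t2 {n : ℕ} {lam mu : Fin n → ℂ} (A : GLRep n lam) (B : GLRep n mu)
    (i j : Fin n) : A.V ⊗[ℂ] B.V →ₗ[ℂ] A.V ⊗[ℂ] B.V :=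
  ∑ a : Fin n, TensorProduct.map (A.E i a) (B.E a j)

/-- Irreducibility of `L(λ) ⊗ L(μ)` as a module over the Yangian `Y(gl_n)`:
the only subspaces invariant under all the operators `t1` and `t2`
(the generators `t_{ij}^{(r)}` with `r ≥ 3` acting as zero) are `⊥` and `⊤`. -/
def YangianIrred2 {n : ℕ} {lam mu : Fin n → ℂ} (A : GLRep n lam) (B : GLRep n mu) : Prop :=
  ∀ U : Submodule ℂ (A.V ⊗[ℂ] B.V),
    (∀ i j : Fin n, ∀ v ∈ U, t1 A B i j v ∈ U) →
    (∀ i j : Fin n, ∀ v ∈ U, t2 A B i j v ∈ U) →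
    U = ⊥ ∨ U = ⊤

/-- The shifted weight `l_i = λ_i − i + 1` (with `0`-indexed entries:
`l i = lam i - i`). -/
def lshiftC (n : ℕ) (lam : Fin n → ℂ) : Fin n → ℂ :=
  fun i => lam i - ((i : ℕ) : ℂ)

/-- The set `⟨l_j, l_i⟩ = {l_j + t : t ∈ ℤ, 0 ≤ t ≤ l_i − l_j} \ {l_s : i ≤ s ≤ j}`
for a pair of indices `i < j`. -/
def bracketC (n : ℕ) (l : Fin n → ℂ) (i j : Fin n) : Set ℂ :=
  {x | (∃ t : ℕ, x = l j + (t : ℂ)) ∧ (∃ t : ℕ, l i = x + (t : ℂ)) ∧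
    ∀ s : Fin n, i ≤ s → s ≤ j → x ≠ l s}

/-- The condition `m_j, m_i ∉ ⟨l_j, l_i⟩ or l_j, l_i ∉ ⟨m_j, m_i⟩` for a pair
of indices `i < j`. -/
def SepCond (n : ℕ) (lam mu : Fin n → ℂ) (i j : Fin n) : Prop :=
  (lshiftC n mu j ∉ bracketC n (lshiftC n lam) i j ∧
      lshiftC n mu i ∉ bracketC n (lshiftC n lam) i j) ∨
  (lshiftC n lam j ∉ bracketC n (lshiftC n mu) i j ∧
      lshiftC n lam i ∉ bracketC n (lshiftC n mu) i j)


section PBW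

variable {n : ℕ} {M : Type*} [AddCommGroup M] [Module ℂ M]

/-- Lowering words applied to `v0`, with at most `d` letters of the second kind. -/
inductive LowWord (T1 T2 : Fin n → Fin n → (M →ₗ[ℂ] M)) (v0 : M) : ℕ → M → Prop
  | base (d : ℕ) : LowWord T1 T2 v0 d v0
  | one (d : ℕ) (m : M) (i j : Fin n) (hij : j < i) (h : LowWord T1 T2 v0 d m) :
      LowWord T1 T2 v0 d (T1 i j m)
  | two (d : ℕ) (m : M) (i j : Fin n) (hij : j < i) (h : LowWord T1 T2 v0 d m) :
      LowWord T1 T2 v0 (d + 1) (T2 i j m)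

/-- Span of lowering words. -/
def LowSpan (T1 T2 : Fin n → Fin n → (M →ₗ[ℂ] M)) (v0 : M) (d : ℕ) : Submodule ℂ M :=
  Submodule.span ℂ {m | LowWord T1 T2 v0 d m}

variable {T1 T2 : Fin n → Fin n → (M →ₗ[ℂ] M)} {v0 : M}

lemma LowWord.succ {d : ℕ} {m : M} (h : LowWord T1 T2 v0 d m) : LowWord T1 T2 v0 (d + 1) m := by
  induction h with
  | base d => exact .base _
  | one d m i j hij h ih => exact .one _ _ _ _ hij ih
  | two d m i j hij h ih => exact .two _ _ _ _ hij ih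

lemma LowSpan_succ (d : ℕ) : LowSpan T1 T2 v0 d ≤ LowSpan T1 T2 v0 (d + 1) :=
  Submodule.span_mono fun _ h => LowWord.succ h

lemma span_map_mem {S : Set M} {N : Submodule ℂ M} (f : M →ₗ[ℂ] M)
    (h : ∀ m ∈ S, f m ∈ N) : ∀ m ∈ Submodule.span ℂ S, f m ∈ N := by
  intro m hm
  have : Submodule.span ℂ S ≤ N.comap f := Submodule.span_le.2 h
  exact this hm

lemma LowSpan_one {d : ℕ} {i j : Fin n} (hij : j < i) :
    ∀ m ∈ LowSpan T1 T2 v0 d, T1 i j m ∈ LowSpan T1 T2 v0 d :=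
  span_map_mem _ fun m hm => Submodule.subset_span (.one _ _ _ _ hij hm)

lemma LowSpan_two {d : ℕ} {i j : Fin n} (hij : j < i) :
    ∀ m ∈ LowSpan T1 T2 v0 d, T2 i j m ∈ LowSpan T1 T2 v0 (d + 1) :=
  span_map_mem _ fun m hm => Submodule.subset_span (.two _ _ _ _ hij hm)

lemma LowSpan_stable
    (ha : ∀ i j k l : Fin n, ∀ m, T1 i j (T1 k l m) = T1 k l (T1 i j m)
      + ((if j = k then T1 i l m else 0) - (if l = i then T1 k j m else 0)))
    (hb : ∀ i j k l : Fin n, ∀ m, T1 i j (T2 k l m) = T2 k l (T1 i j m)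
      + ((if j = k then T2 i l m else 0) - (if l = i then T2 k j m else 0)))
    (hc : ∀ i j k l : Fin n, ∀ m, T2 i j (T2 k l m) = T2 k l (T2 i j m)
      + (T1 k j (T2 i l m) - T2 k j (T1 i l m)))
    (h1 : Fin n → ℂ) (h2 : Fin n → ℂ)
    (hup1 : ∀ i j, i < j → T1 i j v0 = 0) (hup2 : ∀ i j, i < j → T2 i j v0 = 0)
    (hd1 : ∀ i, T1 i i v0 = h1 i • v0) (hd2 : ∀ i, T2 i i v0 = h2 i • v0) (d : ℕ) :
    (∀ m, LowWord T1 T2 v0 d m → ∀ a b, T1 a b m ∈ LowSpan T1 T2 v0 d) ∧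
    (∀ m, LowWord T1 T2 v0 d m → ∀ a b, T2 a b m ∈ LowSpan T1 T2 v0 (d + 1)) := by
  have hb' : ∀ i j k l : Fin n, ∀ m, T2 k l (T1 i j m) = T1 i j (T2 k l m)
      - ((if j = k then T2 i l m else 0) - (if l = i then T2 k j m else 0)) := by
    intro i j k l m; rw [hb]; abel
  have hv1 : ∀ d a b, T1 a b v0 ∈ LowSpan T1 T2 v0 d := by
    intro d a b
    have hv : v0 ∈ LowSpan T1 T2 v0 d := Submodule.subset_span (.base d)
    rcases lt_trichotomy a b with h | h | h
    · rw [hup1 _ _ h]; exact zero_mem _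
    · subst h; rw [hd1]; exact Submodule.smul_mem _ _ hv
    · exact LowSpan_one h _ hv
  have hv2 : ∀ d a b, T2 a b v0 ∈ LowSpan T1 T2 v0 (d + 1) := by
    intro d a b
    have hv : v0 ∈ LowSpan T1 T2 v0 d := Submodule.subset_span (.base d)
    rcases lt_trichotomy a b with h | h | h
    · rw [hup2 _ _ h]; exact zero_mem _
    · subst h; rw [hd2]; exact Submodule.smul_mem _ _ (LowSpan_succ _ hv)
    · exact LowSpan_two h _ hv
  have key : ∀ d, (∀ m, LowWord T1 T2 v0 d m → ∀ a b, T1 a b m ∈ LowSpan T1 T2 v0 d) ∧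
    (∀ m, LowWord T1 T2 v0 d m → ∀ a b, T2 a b m ∈ LowSpan T1 T2 v0 (d + 1)) := by
    intro d
    induction d using Nat.strong_induction_on with
    | _ D IH =>
    have P1 : ∀ d m, LowWord T1 T2 v0 d m → d = D → ∀ a b, T1 a b m ∈ LowSpan T1 T2 v0 d := by
      intro d m hm
      induction hm with
      | base d => intro _ a b; exact hv1 d a b
      | one d m i j hij h ih =>
        intro hd a b
        rw [ha]
        refine add_mem (LowSpan_one hij _ (ih hd a b)) (sub_mem ?_ ?_)
        · split_ifs
          · exact ih hd _ _
          · exact zero_mem _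
        · split_ifs
          · exact ih hd _ _
          · exact zero_mem _
      | two d m i j hij h ih =>
        intro hd a b
        have I := IH d (by omega)
        rw [hb]
        refine add_mem (LowSpan_two hij _ (I.1 m h a b)) (sub_mem ?_ ?_)
        · split_ifs
          · exact I.2 m h _ _
          · exact zero_mem _
        · split_ifs
          · exact I.2 m h _ _
          · exact zero_mem _
    have P2 : ∀ d m, LowWord T1 T2 v0 d m → d = D → ∀ a b, T2 a b m ∈ LowSpan T1 T2 v0 (d + 1) := by
      intro d m hm
      induction hm with
      | base d => intro _ a b; exact hv2 d a b
      | one d m i j hij h ih =>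
        intro hd a b
        rw [hb']
        refine sub_mem (LowSpan_one hij _ (ih hd a b)) (sub_mem ?_ ?_)
        · split_ifs
          · exact ih hd _ _
          · exact zero_mem _
        · split_ifs
          · exact ih hd _ _
          · exact zero_mem _
      | two d m i j hij h ih =>
        intro hd a b
        have I := IH d (by omega)
        rw [hc]
        refine add_mem (LowSpan_two hij _ (I.2 m h a b)) (sub_mem ?_ ?_)
        · refine LowSpan_succ _ ?_
          exact span_map_mem _ (fun m' hm' => P1 (d + 1) m' hm' hd _ _) _ (I.2 m h _ _)
        · refine LowSpan_succ _ ?_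
          exact span_map_mem _ (fun m' hm' => I.2 m' hm' _ _) _ (I.1 m h _ _)
    exact ⟨fun m hm => P1 D m hm rfl, fun m hm => P2 D m hm rfl⟩
  exact key d

/-- The span of all lowering words. -/
def LowAll (T1 T2 : Fin n → Fin n → (M →ₗ[ℂ] M)) (v0 : M) : Submodule ℂ M :=
  Submodule.span ℂ {m | ∃ d, LowWord T1 T2 v0 d m}

lemma LowSpan_le_all (d : ℕ) : LowSpan T1 T2 v0 d ≤ LowAll T1 T2 v0 :=
  Submodule.span_mono fun _ h => ⟨d, h⟩

lemma LowAll_stable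
    (ha : ∀ i j k l : Fin n, ∀ m, T1 i j (T1 k l m) = T1 k l (T1 i j m)
      + ((if j = k then T1 i l m else 0) - (if l = i then T1 k j m else 0)))
    (hb : ∀ i j k l : Fin n, ∀ m, T1 i j (T2 k l m) = T2 k l (T1 i j m)
      + ((if j = k then T2 i l m else 0) - (if l = i then T2 k j m else 0)))
    (hc : ∀ i j k l : Fin n, ∀ m, T2 i j (T2 k l m) = T2 k l (T2 i j m)
      + (T1 k j (T2 i l m) - T2 k j (T1 i l m)))
    (h1 : Fin n → ℂ) (h2 : Fin n → ℂ)
    (hup1 : ∀ i j, i < j → T1 i j v0 = 0) (hup2 : ∀ i j, i < j → T2 i j v0 = 0)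
    (hd1 : ∀ i, T1 i i v0 = h1 i • v0) (hd2 : ∀ i, T2 i i v0 = h2 i • v0) :
    (∀ m ∈ LowAll T1 T2 v0, ∀ a b, T1 a b m ∈ LowAll T1 T2 v0) ∧
    (∀ m ∈ LowAll T1 T2 v0, ∀ a b, T2 a b m ∈ LowAll T1 T2 v0) := by
  have K := LowSpan_stable ha hb hc h1 h2 hup1 hup2 hd1 hd2
  refine ⟨fun m hm a b => ?_, fun m hm a b => ?_⟩
  · refine span_map_mem _ ?_ m hm
    rintro m' ⟨d, hd⟩
    exact LowSpan_le_all _ ((K d).1 m' hd a b)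
  · refine span_map_mem _ ?_ m hm
    rintro m' ⟨d, hd⟩
    exact LowSpan_le_all _ ((K d).2 m' hd a b)

lemma LowAll_kill (f : M →ₗ[ℂ] ℂ) (hf0 : f v0 = 0)
    (hf1 : ∀ i j : Fin n, j < i → ∀ m, f (T1 i j m) = 0)
    (hf2 : ∀ i j : Fin n, j < i → ∀ m, f (T2 i j m) = 0) :
    ∀ m ∈ LowAll T1 T2 v0, f m = 0 := by
  intro m hm
  have : LowAll T1 T2 v0 ≤ LinearMap.ker f := by
    refine Submodule.span_le.2 ?_
    rintro m ⟨d, h⟩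
    cases h with
    | base d => exact hf0
    | one d m i j hij h => exact hf1 _ _ hij _
    | two d m i j hij h => exact hf2 _ _ hij _
  exact this hm

end PBW

namespace GLRep

variable {n : ℕ} {lam : Fin n → ℂ} (A : GLRep n lam)

lemma comm (i j k l : Fin n) (v : A.V) : A.E i j (A.E k l v) = A.E k l (A.E i j v)
      + ((if j = k then A.E i l v else 0) - (if l = i then A.E k j v else 0)) := by
  have h := congrArg (fun f : A.V →ₗ[ℂ] A.V => f v) (A.commRel i j k l)
  simp only [LinearMap.sub_apply, LinearMap.comp_apply] at h
  rw [eq_add_of_sub_eq' h]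
  congr 2 <;> split_ifs <;> rfl

lemma exists_low : ∃ f : A.V →ₗ[ℂ] ℂ, f A.hv = 1 ∧ (∀ i j : Fin n, j < i → ∀ v, f (A.E i j v) = 0)
    ∧ ∀ i v, f (A.E i i v) = lam i * f v := by
  let Z : Fin n → Fin n → (A.V →ₗ[ℂ] A.V) := fun _ _ => 0
  have hst := LowAll_stable (T1 := A.E) (T2 := Z) (v0 := A.hv) A.comm
    (by intros; simp [Z]) (by intros; simp [Z]) lam 0 A.hv_upper (by intros; simp [Z])
    A.hv_diag (by intros; simp [Z])
  have hv : A.hv ∈ LowAll A.E Z A.hv := Submodule.subset_span ⟨0, .base 0⟩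
  have htop : LowAll A.E Z A.hv = ⊤ := by
    rcases A.irreducible _ (fun i j v hv => hst.1 v hv i j) with h | h
    · rw [h] at hv
      exact absurd ((Submodule.mem_bot ℂ).1 hv) A.hv_ne
    · exact h
  let H : Module.End ℂ A.V := ∑ c : Fin n, ((c : ℕ) : ℂ) • A.E c c
  let h0 : ℂ := ∑ c : Fin n, ((c : ℕ) : ℂ) * lam c
  -- weights of words
  have hwt : ∀ d m, LowWord A.E Z A.hv d m → ∃ (wt : Fin n → ℂ) (t : ℕ),
      (∀ c, A.E c c m = wt c • m) ∧ ∑ c : Fin n, ((c : ℕ) : ℂ) * wt c = h0 + t := by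
    intro d m hm
    induction hm with
    | base d => exact ⟨lam, 0, A.hv_diag, by simp [h0]⟩
    | one d m i j hij h ih =>
      obtain ⟨wt, t, h1, h2⟩ := ih
      refine ⟨fun c => wt c + (if c = i then 1 else 0) - (if c = j then 1 else 0),
        t + ((i : ℕ) - (j : ℕ)), ?_, ?_⟩
      · intro c
        rw [A.comm, h1]
        by_cases hc : c = i <;> by_cases hc' : c = j
        · omega
        · subst hc
          have : ¬ j = c := fun h => hc' h.symm
          simp [hc', this, add_smul]
        · subst hc'
          simp [hc, sub_smul]; abel
        · have : ¬ j = c := fun h => hc' h.symm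
          simp [hc, hc', this]
      · have : (j : ℕ) ≤ (i : ℕ) := le_of_lt hij
        simp only [mul_sub, mul_add, Finset.sum_sub_distrib, Finset.sum_add_distrib, h2]
        push_cast [Nat.cast_sub this]
        simp
        ring
    | two d m i j hij h ih =>
      refine ⟨lam, 0, by intro c; simp [Z], by simp [h0]⟩
  let D : Submodule ℂ A.V := Submodule.span ℂ
    {m | ∃ d i j m', j < i ∧ LowWord A.E Z A.hv d m' ∧ m = A.E i j m'}
  have hH : ∀ (m : A.V) (wt : Fin n → ℂ), (∀ c, A.E c c m = wt c • m) →
      H m = (∑ c : Fin n, ((c : ℕ) : ℂ) * wt c) • m := by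
    intro m wt h
    simp only [H, LinearMap.sum_apply, LinearMap.smul_apply, h, smul_smul, Finset.sum_smul]
  have hDle : D ≤ ⨆ μ, ⨆ (_ : μ ≠ h0), Module.End.eigenspace H μ := by
    refine Submodule.span_le.2 ?_
    rintro m ⟨d, i, j, m', hij, hw, rfl⟩
    obtain ⟨wt, t, h1, h2⟩ := hwt d m' hw
    have hmem : A.E i j m' ∈ Module.End.eigenspace H (h0 + t + ((i : ℕ) - (j : ℕ) : ℂ)) := by
      rw [Module.End.mem_eigenspace_iff]
      have : ∀ c, A.E c c (A.E i j m') =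
          (wt c + (if c = i then 1 else 0) - (if c = j then 1 else 0)) • A.E i j m' := by
        intro c
        rw [A.comm, h1]
        by_cases hc : c = i <;> by_cases hc' : c = j
        · omega
        · subst hc
          have : ¬ j = c := fun h => hc' h.symm
          simp [hc', this, add_smul]
        · subst hc'
          simp [hc, sub_smul]; abel
        · have : ¬ j = c := fun h => hc' h.symm
          simp [hc, hc', this]
      rw [hH _ _ this]
      congr 1
      simp only [mul_sub, mul_add, Finset.sum_sub_distrib, Finset.sum_add_distrib, h2]
      simp
      ring
    refine (le_iSup₂_of_le (f := fun μ (_ : μ ≠ h0) => Module.End.eigenspace H μ)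
      (h0 + t + ((i : ℕ) - (j : ℕ) : ℂ)) ?_ le_rfl) hmem
    intro h
    have h3 : ((t + i : ℕ) : ℂ) = ((j : ℕ) : ℂ) := by
      push_cast; linear_combination h
    have h4 : t + (i : ℕ) = j := by exact_mod_cast h3
    have : (j : ℕ) < i := hij
    omega
  have hnot : A.hv ∉ D := by
    intro h
    have hind := Module.End.eigenspaces_iSupIndep H
    have h1 : A.hv ∈ Module.End.eigenspace H h0 := by
      rw [Module.End.mem_eigenspace_iff, hH _ _ A.hv_diag]
    exact A.hv_ne ((Submodule.disjoint_def.1 (hind h0)) _ h1 (hDle h))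
  obtain ⟨f, hf1, hf2⟩ := Submodule.exists_dual_map_eq_bot_of_notMem hnot inferInstance
  have hfD : ∀ m ∈ D, f m = 0 := by
    intro m hm
    have : f m ∈ D.map f := Submodule.mem_map_of_mem hm
    rw [hf2] at this
    exact (Submodule.mem_bot ℂ).1 this
  have hlow : ∀ i j : Fin n, j < i → ∀ v, f (A.E i j v) = 0 := by
    intro i j hij v
    have hv : v ∈ LowAll A.E Z A.hv := htop ▸ Submodule.mem_top
    have : LowAll A.E Z A.hv ≤ LinearMap.ker (f ∘ₗ A.E i j) := by
      refine Submodule.span_le.2 ?_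
      rintro m ⟨d, h⟩
      exact hfD _ (Submodule.subset_span ⟨d, i, j, m, hij, h, rfl⟩)
    exact this hv
  have hdiag : ∀ i v, f (A.E i i v) = lam i * f v := by
    intro i v
    have hv : v ∈ LowAll A.E Z A.hv := htop ▸ Submodule.mem_top
    have : LowAll A.E Z A.hv ≤ LinearMap.ker (f ∘ₗ A.E i i - lam i • f) := by
      refine Submodule.span_le.2 ?_
      rintro m ⟨d, h⟩
      obtain ⟨wt, t, h1, h2⟩ := hwt d m h
      show (f ∘ₗ A.E i i - lam i • f) m = 0
      cases h with
      | base d => simp [A.hv_diag]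
      | one d m i' j' hij h => simp [h1, hlow _ _ hij]
      | two d m i' j' hij h => simp [Z]
    have := this hv
    simp only [LinearMap.mem_ker, LinearMap.sub_apply, LinearMap.comp_apply, LinearMap.smul_apply,
      smul_eq_mul, sub_eq_zero] at this
    exact this
  refine ⟨(f A.hv)⁻¹ • f, by simp [hf1], ?_, ?_⟩
  · intro i j hij v; simp [hlow i j hij]
  · intro i v; simp [hdiag]; ring

end GLRep

section RingRel

variable {R : Type*} [Ring R]

/-- The `gl_n` commutation relations in a ring. -/
def GLRel (n : ℕ) (X : ℕ → ℕ → R) : Prop :=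
  ∀ i j k l : ℕ, i < n → j < n → k < n → l < n → X i j * X k l = X k l * X i j
    + ((if j = k then X i l else 0) - (if l = i then X k j else 0))

variable {n : ℕ} {X Y : ℕ → ℕ → R}

lemma rel_b (hX : GLRel n X) (hY : GLRel n Y) (hXY : ∀ i j k l, X i j * Y k l = Y k l * X i j)
    (i j k l : ℕ) (hi : i < n) (hj : j < n) (hk : k < n) (hl : l < n) :
    (X i j + Y i j) * (∑ a ∈ Finset.range n, X k a * Y a l) =
      (∑ a ∈ Finset.range n, X k a * Y a l) * (X i j + Y i j) +
      ((if j = k then ∑ a ∈ Finset.range n, X i a * Y a l else 0)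
        - (if l = i then ∑ a ∈ Finset.range n, X k a * Y a j else 0)) := by
  have h1 : ∀ a ∈ Finset.range n, (X i j + Y i j) * (X k a * Y a l) =
      X k a * Y a l * (X i j + Y i j) + (((if j = k then X i a * Y a l else 0)
        - (if l = i then X k a * Y a j else 0)) +
        ((if j = a then X k a * Y i l else 0) - (if a = i then X k j * Y a l else 0))) := by
    intro a ha
    have ha' := Finset.mem_range.1 ha
    have e1 : X i j * (X k a * Y a l) = X k a * Y a l * X i j +
        (((if j = k then X i a * Y a l else 0) - (if a = i then X k j * Y a l else 0))) := by
      rw [← mul_assoc, hX i j k a hi hj hk ha', add_mul, mul_assoc, hXY, ← mul_assoc]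
      simp only [sub_mul, ite_mul, zero_mul]
    have e2 : Y i j * (X k a * Y a l) = X k a * Y a l * Y i j +
        (((if j = a then X k a * Y i l else 0) - (if l = i then X k a * Y a j else 0))) := by
      rw [← mul_assoc, ← hXY, mul_assoc, hY i j a l hi hj ha' hl, mul_add, mul_assoc]
      simp only [mul_sub, mul_ite, mul_zero]
    rw [add_mul, e1, e2, mul_add]
    abel
  rw [Finset.mul_sum, Finset.sum_congr rfl h1, Finset.sum_add_distrib, ← Finset.sum_mul,
    Finset.sum_add_distrib, Finset.sum_sub_distrib, Finset.sum_sub_distrib]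
  have h2 : ∑ a ∈ Finset.range n, (if j = a then X k a * Y i l else 0) = X k j * Y i l := by
    rw [Finset.sum_ite_eq]; simp [hj]
  have h3 : ∑ a ∈ Finset.range n, (if a = i then X k j * Y a l else 0) = X k j * Y i l := by
    rw [Finset.sum_ite_eq']; simp [hi]
  rw [h2, h3]
  split_ifs <;> simp

lemma rel_c (hX : GLRel n X) (hY : GLRel n Y) (hXY : ∀ i j k l, X i j * Y k l = Y k l * X i j)
    (i j k l : ℕ) (hi : i < n) (hj : j < n) (hk : k < n) (hl : l < n) :
    (∑ a ∈ Finset.range n, X i a * Y a j) * (∑ a ∈ Finset.range n, X k a * Y a l) =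
      (∑ a ∈ Finset.range n, X k a * Y a l) * (∑ a ∈ Finset.range n, X i a * Y a j) +
      ((X k j + Y k j) * (∑ a ∈ Finset.range n, X i a * Y a l)
        - (∑ a ∈ Finset.range n, X k a * Y a j) * (X i l + Y i l)) := by
  have h1 : ∀ a ∈ Finset.range n, ∀ b ∈ Finset.range n, (X i a * Y a j) * (X k b * Y b l) =
      (X k b * Y b l) * (X i a * Y a j) +
      (((if a = k then X i b * Y a j * Y b l else 0) - (if b = i then X k a * Y a j * Y b l else 0))
      + ((if j = b then X k b * X i a * Y a l else 0)
        - (if l = a then X k b * X i a * Y b j else 0))) := by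
    intro a ha b hb
    have ha' := Finset.mem_range.1 ha
    have hb' := Finset.mem_range.1 hb
    have e0 : (X i a * Y a j) * (X k b * Y b l) = (X i a * X k b) * (Y a j * Y b l) := by
      rw [mul_assoc, ← mul_assoc (Y a j), ← hXY, mul_assoc, mul_assoc]
    have e1 : (X k b * Y b l) * (X i a * Y a j) = (X k b * X i a) * (Y b l * Y a j) := by
      rw [mul_assoc, ← mul_assoc (Y b l), ← hXY, mul_assoc, mul_assoc]
    rw [e0, e1, hX i a k b hi ha' hk hb', add_mul, hY a j b l ha' hj hb' hl, mul_add]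
    have e2 : ((if a = k then X i b else 0) - if b = i then X k a else 0) *
        (Y b l * Y a j + ((if j = b then Y a l else 0) - if l = a then Y b j else 0)) =
        ((if a = k then X i b * Y a j * Y b l else 0) -
          (if b = i then X k a * Y a j * Y b l else 0)) := by
      rw [← hY a j b l ha' hj hb' hl]
      simp only [sub_mul, ite_mul, zero_mul, mul_assoc]
    rw [e2]
    simp only [mul_sub, mul_ite, mul_zero, mul_assoc]
    abel
  have h2 : (∑ a ∈ Finset.range n, X i a * Y a j) * (∑ a ∈ Finset.range n, X k a * Y a l) =
     ∑ a ∈ Finset.range n, ∑ b ∈ Finset.range n, ((X k b * Y b l) * (X i a * Y a j) +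
      (((if a = k then X i b * Y a j * Y b l else 0) - (if b = i then X k a * Y a j * Y b l else 0))
      + ((if j = b then X k b * X i a * Y a l else 0)
        - (if l = a then X k b * X i a * Y b j else 0)))) := by
    rw [Finset.sum_mul_sum]
    exact Finset.sum_congr rfl fun a ha => Finset.sum_congr rfl fun b hb => h1 a ha b hb
  have h3 : ∀ a, ∑ b ∈ Finset.range n, (if a = k then X i b * Y a j * Y b l else 0) =
      if a = k then ∑ b ∈ Finset.range n, X i b * Y k j * Y b l else 0 := by
    intro a; split_ifs with h
    · rw [h]
    · simp
  have h4 : ∀ a, ∑ b ∈ Finset.range n, (if l = a then X k b * X i a * Y b j else 0) =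
      if l = a then ∑ b ∈ Finset.range n, X k b * X i l * Y b j else 0 := by
    intro a; split_ifs with h
    · rw [h]
    · simp
  rw [h2]
  simp only [Finset.sum_add_distrib, Finset.sum_sub_distrib, h3, h4, Finset.sum_ite_eq,
    Finset.sum_ite_eq', Finset.mem_range, hi, hj, hk, hl, if_true]
  rw [Finset.sum_comm, ← Finset.sum_mul_sum]
  congr 1
  rw [add_mul, mul_add, Finset.mul_sum, Finset.mul_sum, Finset.sum_mul, Finset.sum_mul]
  have e1 : ∀ a, Y k j * (X i a * Y a l) = X i a * Y k j * Y a l := by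
    intro a; rw [← mul_assoc, ← hXY]
  have e2 : ∀ a, X k j * (X i a * Y a l) = X k j * X i a * Y a l := by
    intro a; rw [← mul_assoc]
  have e3 : ∀ a, X k a * Y a j * X i l = X k a * X i l * Y a j := by
    intro a; rw [mul_assoc, ← hXY, mul_assoc]
  simp only [e1, e2, e3]
  abel

end RingRel

section Tau

variable {U V : Type} [AddCommGroup U] [Module ℂ U] [AddCommGroup V] [Module ℂ V]

/-- The action of `t_{ij}^{(1)}`, indexed by natural numbers. -/
noncomputable def tau1 (E : ℕ → ℕ → Module.End ℂ U) (F : ℕ → ℕ → Module.End ℂ V) (i j : ℕ) :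
    Module.End ℂ (U ⊗[ℂ] V) :=
  TensorProduct.map (E i j) LinearMap.id + TensorProduct.map LinearMap.id (F i j)

/-- The action of `t_{ij}^{(2)}`, indexed by natural numbers. -/
noncomputable def tau2 (n : ℕ) (E : ℕ → ℕ → Module.End ℂ U) (F : ℕ → ℕ → Module.End ℂ V)
    (i j : ℕ) : Module.End ℂ (U ⊗[ℂ] V) :=
  ∑ a ∈ Finset.range n, TensorProduct.map (E i a) (F a j)

variable {n : ℕ} {E : ℕ → ℕ → Module.End ℂ U} {F : ℕ → ℕ → Module.End ℂ V}

lemma tau1_tmul (i j : ℕ) (u : U) (v : V) :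
    tau1 E F i j (u ⊗ₜ v) = E i j u ⊗ₜ v + u ⊗ₜ F i j v := by simp [tau1]

lemma tau2_tmul (i j : ℕ) (u : U) (v : V) :
    tau2 n E F i j (u ⊗ₜ v) = ∑ a ∈ Finset.range n, E i a u ⊗ₜ F a j v := by simp [tau2]

lemma map_split (f : Module.End ℂ U) (g : Module.End ℂ V) : TensorProduct.map f g =
    (TensorProduct.map f LinearMap.id * TensorProduct.map LinearMap.id g :
      Module.End ℂ (U ⊗[ℂ] V)) := by
  ext; simp [Module.End.mul_apply]

lemma GLRel.left (hE : GLRel n E) : GLRel n (fun i j =>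
    (TensorProduct.map (E i j) LinearMap.id : Module.End ℂ (U ⊗[ℂ] V))) := by
  intro i j k l hi hj hk hl
  ext u v
  have := congrArg (fun f => f u) (hE i j k l hi hj hk hl)
  simp only [Module.End.mul_apply, LinearMap.add_apply, LinearMap.sub_apply] at this
  simp only [TensorProduct.AlgebraTensorModule.curry_apply, LinearMap.restrictScalars_self,
    TensorProduct.curry_apply, Module.End.mul_apply, LinearMap.add_apply, LinearMap.sub_apply,
    TensorProduct.map_tmul, LinearMap.id_apply, this, TensorProduct.add_tmul,
    TensorProduct.sub_tmul]
  congr 2 <;> split_ifs <;> simp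

lemma GLRel.right (hF : GLRel n F) : GLRel n (fun i j =>
    (TensorProduct.map LinearMap.id (F i j) : Module.End ℂ (U ⊗[ℂ] V))) := by
  intro i j k l hi hj hk hl
  ext u v
  have := congrArg (fun f => f v) (hF i j k l hi hj hk hl)
  simp only [Module.End.mul_apply, LinearMap.add_apply, LinearMap.sub_apply] at this
  simp only [TensorProduct.AlgebraTensorModule.curry_apply, LinearMap.restrictScalars_self,
    TensorProduct.curry_apply, Module.End.mul_apply, LinearMap.add_apply, LinearMap.sub_apply,
    TensorProduct.map_tmul, LinearMap.id_apply, this, TensorProduct.tmul_add,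
    TensorProduct.tmul_sub]
  congr 2 <;> split_ifs <;> simp

lemma left_right_comm (i j k l : ℕ) :
    (TensorProduct.map (E i j) LinearMap.id * TensorProduct.map LinearMap.id (F k l) :
      Module.End ℂ (U ⊗[ℂ] V)) =
    TensorProduct.map LinearMap.id (F k l) * TensorProduct.map (E i j) LinearMap.id := by
  ext; simp [Module.End.mul_apply]

lemma tau2_eq (i j : ℕ) : tau2 n E F i j = ∑ a ∈ Finset.range n,
    (TensorProduct.map (E i a) LinearMap.id * TensorProduct.map LinearMap.id (F a j) :
      Module.End ℂ (U ⊗[ℂ] V)) := by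
  unfold tau2; exact Finset.sum_congr rfl fun a _ => map_split _ _

lemma tau_a (hE : GLRel n E) (hF : GLRel n F) : GLRel n (tau1 E F) := by
  intro i j k l hi hj hk hl
  have h1 := hE.left (V := V) i j k l hi hj hk hl
  have h2 := hF.right (U := U) i j k l hi hj hk hl
  have c1 := left_right_comm (E := E) (F := F) i j k l
  have c2 := left_right_comm (E := E) (F := F) k l i j
  simp only [tau1] at *
  rw [add_mul, mul_add, mul_add, h1, h2, c1, ← c2]
  rw [add_mul, mul_add, mul_add]
  split_ifs <;> abel

lemma tau_b (hE : GLRel n E) (hF : GLRel n F)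
    (i j k l : ℕ) (hi : i < n) (hj : j < n) (hk : k < n) (hl : l < n) :
    tau1 E F i j * tau2 n E F k l = tau2 n E F k l * tau1 E F i j +
      ((if j = k then tau2 n E F i l else 0) - (if l = i then tau2 n E F k j else 0)) := by
  simp only [tau2_eq]
  exact rel_b hE.left hF.right (fun i j k l => left_right_comm i j k l) i j k l hi hj hk hl

lemma tau_c (hE : GLRel n E) (hF : GLRel n F)
    (i j k l : ℕ) (hi : i < n) (hj : j < n) (hk : k < n) (hl : l < n) :
    tau2 n E F i j * tau2 n E F k l = tau2 n E F k l * tau2 n E F i j +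
      (tau1 E F k j * tau2 n E F i l - tau2 n E F k j * tau1 E F i l) := by
  simp only [tau2_eq]
  exact rel_c hE.left hF.right (fun i j k l => left_right_comm i j k l) i j k l hi hj hk hl

end Tau

section Tr

variable {W : Type} [AddCommGroup W] [Module ℂ W]

/-- The relations satisfied by the generators of the Yangian (of level two). -/
structure YRel (n : ℕ) (T1 T2 : ℕ → ℕ → Module.End ℂ W) : Prop where
  a : GLRel n T1
  b : ∀ i j k l : ℕ, i < n → j < n → k < n → l < n → T1 i j * T2 k l = T2 k l * T1 i j
    + ((if j = k then T2 i l else 0) - (if l = i then T2 k j else 0))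
  c : ∀ i j k l : ℕ, i < n → j < n → k < n → l < n → T2 i j * T2 k l = T2 k l * T2 i j
    + (T1 k j * T2 i l - T2 k j * T1 i l)

/-- Pairs of an operator and its transpose under the anti-involution `t_{ij} ↦ t_{ji}`. -/
inductive Tr (n : ℕ) (T1 T2 : ℕ → ℕ → Module.End ℂ W) : Module.End ℂ W → Module.End ℂ W → Prop
  | gen1 (i j : ℕ) (hi : i < n) (hj : j < n) : Tr n T1 T2 (T1 i j) (T1 j i)
  | gen2 (i j : ℕ) (hi : i < n) (hj : j < n) : Tr n T1 T2 (T2 i j) (T2 j i)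
  | one : Tr n T1 T2 1 1
  | zero : Tr n T1 T2 0 0
  | add {X X' Y Y' : Module.End ℂ W} (hX : Tr n T1 T2 X X') (hY : Tr n T1 T2 Y Y') :
      Tr n T1 T2 (X + Y) (X' + Y')
  | smul (c : ℂ) {X X' : Module.End ℂ W} (hX : Tr n T1 T2 X X') : Tr n T1 T2 (c • X) (c • X')
  | mul {X X' Y Y' : Module.End ℂ W} (hX : Tr n T1 T2 X X') (hY : Tr n T1 T2 Y Y') :
      Tr n T1 T2 (X * Y) (Y' * X')

variable {n : ℕ} {T1 T2 : ℕ → ℕ → Module.End ℂ W}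

lemma Tr.sum {ι : Type} (s : Finset ι) {X X' : ι → Module.End ℂ W}
    (h : ∀ i ∈ s, Tr n T1 T2 (X i) (X' i)) : Tr n T1 T2 (∑ i ∈ s, X i) (∑ i ∈ s, X' i) := by
  classical
  induction s using Finset.induction_on with
  | empty => simpa using Tr.zero
  | insert a s ha ih =>
    rw [Finset.sum_insert ha, Finset.sum_insert ha]
    exact .add (h _ (Finset.mem_insert_self _ _))
      (ih fun i hi => h i (Finset.mem_insert_of_mem hi))

/-- Elementary consequence of the highest-weight theory: the contravariant form is symmetric. -/
lemma Tr.symm_form (hY : YRel n T1 T2) (ζ : W) (φ : W →ₗ[ℂ] ℂ) (h1 h2 : ℕ → ℂ)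
    (hup1 : ∀ i j, i < j → j < n → T1 i j ζ = 0) (hup2 : ∀ i j, i < j → j < n → T2 i j ζ = 0)
    (hd1 : ∀ i, i < n → T1 i i ζ = h1 i • ζ) (hd2 : ∀ i, i < n → T2 i i ζ = h2 i • ζ)
    (pup1 : ∀ i j, j < i → i < n → ∀ v, φ (T1 i j v) = 0)
    (pup2 : ∀ i j, j < i → i < n → ∀ v, φ (T2 i j v) = 0)
    (pd1 : ∀ i, i < n → ∀ v, φ (T1 i i v) = h1 i * φ v)
    (pd2 : ∀ i, i < n → ∀ v, φ (T2 i i v) = h2 i * φ v)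
    {X X' : Module.End ℂ W} (hX : Tr n T1 T2 X X') : φ (X ζ) = φ (X' ζ) := by
  let S1 : Fin n → Fin n → (W × Module.Dual ℂ W →ₗ[ℂ] W × Module.Dual ℂ W) := fun i j =>
    LinearMap.prodMap (T1 i j) (LinearMap.dualMap (T1 j i))
  let S2 : Fin n → Fin n → (W × Module.Dual ℂ W →ₗ[ℂ] W × Module.Dual ℂ W) := fun i j =>
    LinearMap.prodMap (T2 i j) (LinearMap.dualMap (T2 j i))
  have ra : ∀ i j k l : Fin n, ∀ v, T1 i j (T1 k l v) = T1 k l (T1 i j v)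
      + ((if j = k then T1 i l v else 0) - (if l = i then T1 k j v else 0)) := by
    intro i j k l v
    have := congrArg (fun f => f v) (hY.a i j k l i.2 j.2 k.2 l.2)
    simp only [Module.End.mul_apply, LinearMap.add_apply, LinearMap.sub_apply] at this
    rw [this]; congr 2 <;> simp only [Fin.val_inj] <;> split_ifs <;> rfl
  have rb : ∀ i j k l : Fin n, ∀ v, T1 i j (T2 k l v) = T2 k l (T1 i j v)
      + ((if j = k then T2 i l v else 0) - (if l = i then T2 k j v else 0)) := by
    intro i j k l v
    have := congrArg (fun f => f v) (hY.b i j k l i.2 j.2 k.2 l.2)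
    simp only [Module.End.mul_apply, LinearMap.add_apply, LinearMap.sub_apply] at this
    rw [this]; congr 2 <;> simp only [Fin.val_inj] <;> split_ifs <;> rfl
  have rc : ∀ i j k l : Fin n, ∀ v, T2 i j (T2 k l v) = T2 k l (T2 i j v)
      + (T1 k j (T2 i l v) - T2 k j (T1 i l v)) := by
    intro i j k l v
    have := congrArg (fun f => f v) (hY.c i j k l i.2 j.2 k.2 l.2)
    simpa only [Module.End.mul_apply, LinearMap.add_apply, LinearMap.sub_apply] using this
  have fst_ite : ∀ (p : Prop) [Decidable p] (x : W × Module.Dual ℂ W),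
      (if p then x else 0).1 = if p then x.1 else 0 := by
    intro p _ x; split_ifs <;> rfl
  have snd_ite : ∀ (p : Prop) [Decidable p] (x : W × Module.Dual ℂ W) (w : W),
      (if p then x else 0).2 w = if p then x.2 w else 0 := by
    intro p _ x w; split_ifs <;> rfl
  have psi_ite : ∀ (ψ : Module.Dual ℂ W) (p : Prop) [Decidable p] (x : W),
      ψ (if p then x else 0) = if p then ψ x else 0 := by
    intro ψ p _ x; split_ifs <;> simp
  have Sa : ∀ i j k l : Fin n, ∀ m, S1 i j (S1 k l m) = S1 k l (S1 i j m)
      + ((if j = k then S1 i l m else 0) - (if l = i then S1 k j m else 0)) := by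
    rintro i j k l ⟨v, ψ⟩
    refine Prod.ext ?_ (LinearMap.ext fun w => ?_)
    · simp only [Prod.fst_add, Prod.fst_sub, fst_ite]
      exact ra i j k l v
    · have e1 := congrArg ψ (ra l k j i w)
      simp only [map_add, map_sub, psi_ite] at e1
      simp only [Prod.snd_add, Prod.snd_sub, LinearMap.add_apply, LinearMap.sub_apply, snd_ite]
      simp only [eq_comm (a := j) (b := k), eq_comm (a := l) (b := i)]
      exact e1
  have Sb : ∀ i j k l : Fin n, ∀ m, S1 i j (S2 k l m) = S2 k l (S1 i j m)
      + ((if j = k then S2 i l m else 0) - (if l = i then S2 k j m else 0)) := by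
    rintro i j k l ⟨v, ψ⟩
    refine Prod.ext ?_ (LinearMap.ext fun w => ?_)
    · simp only [Prod.fst_add, Prod.fst_sub, fst_ite]
      exact rb i j k l v
    · have e1 := congrArg ψ (rb j i l k w)
      simp only [map_add, map_sub, psi_ite] at e1
      simp only [Prod.snd_add, Prod.snd_sub, LinearMap.add_apply, LinearMap.sub_apply, snd_ite]
      simp only [eq_comm (a := j) (b := k), eq_comm (a := l) (b := i)]
      have e2 : ψ (T2 l k (T1 j i w)) = ψ (T1 j i (T2 l k w)) +
          ((if k = j then ψ (T2 l i w) else 0) - (if i = l then ψ (T2 j k w) else 0)) := by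
        rw [e1]; abel
      exact e2
  have Sc : ∀ i j k l : Fin n, ∀ m, S2 i j (S2 k l m) = S2 k l (S2 i j m)
      + (S1 k j (S2 i l m) - S2 k j (S1 i l m)) := by
    rintro i j k l ⟨v, ψ⟩
    refine Prod.ext ?_ (LinearMap.ext fun w => ?_)
    · simp only [Prod.fst_add, Prod.fst_sub]
      exact rc i j k l v
    · have e1 := congrArg ψ (rc l k j i w)
      have e2 := congrArg ψ (rb j k l i w)
      have e3 := congrArg ψ (rb l i j k w)
      simp only [map_add, map_sub, psi_ite] at e1 e2 e3
      simp only [Prod.snd_add, Prod.snd_sub, LinearMap.add_apply, LinearMap.sub_apply]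
      have e4 : ψ (T2 l k (T2 j i w)) = ψ (T2 j i (T2 l k w)) +
          (ψ (T2 l i (T1 j k w)) - ψ (T1 l i (T2 j k w))) := by
        rw [e1, e2, e3]; abel
      exact e4
  have hst := LowAll_stable (T1 := S1) (T2 := S2) (v0 := (ζ, φ)) Sa Sb Sc
    (fun i => h1 i) (fun i => h2 i)
    (fun i j h => Prod.ext (hup1 i j h j.2) (LinearMap.ext fun w => pup1 j i h j.2 w))
    (fun i j h => Prod.ext (hup2 i j h j.2) (LinearMap.ext fun w => pup2 j i h j.2 w))
    (fun i => Prod.ext (hd1 i i.2) (LinearMap.ext fun w => pd1 i i.2 w))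
    (fun i => Prod.ext (hd2 i i.2) (LinearMap.ext fun w => pd2 i i.2 w))
  have hpres : ∀ {X X' : Module.End ℂ W}, Tr n T1 T2 X X' → ∀ m ∈ LowAll S1 S2 (ζ, φ),
      (X m.1, LinearMap.dualMap X' m.2) ∈ LowAll S1 S2 (ζ, φ) := by
    intro X X' h
    induction h with
    | gen1 i j hi hj => intro m hm; exact hst.1 m hm ⟨i, hi⟩ ⟨j, hj⟩
    | gen2 i j hi hj => intro m hm; exact hst.2 m hm ⟨i, hi⟩ ⟨j, hj⟩
    | one => intro m hm; exact hm
    | zero =>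
      intro m hm
      have : ((0 : Module.End ℂ W) m.1, LinearMap.dualMap (0 : Module.End ℂ W) m.2) = 0 := by
        refine Prod.ext rfl (LinearMap.ext fun w => ?_)
        simp
      rw [this]; exact zero_mem _
    | add hX hY ih1 ih2 =>
      intro m hm
      convert add_mem (ih1 m hm) (ih2 m hm) using 1
      refine Prod.ext rfl (LinearMap.ext fun w => ?_)
      simp
    | smul c hX ih =>
      intro m hm
      convert Submodule.smul_mem _ c (ih m hm) using 1
      refine Prod.ext rfl (LinearMap.ext fun w => ?_)
      simp
    | mul hX hY ih1 ih2 =>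
      intro m hm
      exact ih1 _ (ih2 m hm)
  let f : W × Module.Dual ℂ W →ₗ[ℂ] ℂ :=
    φ ∘ₗ LinearMap.fst ℂ W (Module.Dual ℂ W) -
      (LinearMap.applyₗ ζ) ∘ₗ LinearMap.snd ℂ W (Module.Dual ℂ W)
  have hk := LowAll_kill (T1 := S1) (T2 := S2) (v0 := (ζ, φ)) f (by simp [f])
    (by
      rintro i j h ⟨v, ψ⟩
      simp [f, S1, pup1 i j h i.2, hup1 j i h i.2])
    (by
      rintro i j h ⟨v, ψ⟩
      simp [f, S2, pup2 i j h i.2, hup2 j i h i.2])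
  have := hk _ (hpres hX (ζ, φ) (Submodule.subset_span ⟨0, .base 0⟩))
  simpa [f, sub_eq_zero] using this

end Tr

section Lowering

variable {V : Type} [AddCommGroup V] [Module ℂ V]

lemma GLRel.app {n : ℕ} {E : ℕ → ℕ → Module.End ℂ V} (hE : GLRel n E) {i j k l : ℕ}
    (hi : i < n) (hj : j < n) (hk : k < n) (hl : l < n) (v : V) :
    E i j (E k l v) = E k l (E i j v)
    + ((if j = k then E i l v else 0) - (if l = i then E k j v else 0)) := by
  have := congrArg (fun f => f v) (hE i j k l hi hj hk hl)
  simp only [Module.End.mul_apply, LinearMap.add_apply, LinearMap.sub_apply] at this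
  rw [this]; congr 2 <;> split_ifs <;> rfl

/-- The system of vectors used in the construction of lowering operators. -/
structure WSys (n : ℕ) (E : ℕ → ℕ → Module.End ℂ V) (i k : ℕ) (x : V) (xw r : ℕ → ℂ)
    (w : ℕ → V) : Prop where
  rel : GLRel n E
  hik : i < k
  hkn : k < n
  wt : ∀ c, c < n → E c c x = xw c • x
  sing : ∀ d c, d < c → c < k → E d c x = 0
  singk : ∀ d, d < i → E d k x = 0
  rne : ∀ c, i < c → c ≤ k → r c ≠ 0
  req : ∀ c, i < c → c < k → r c = xw i + c - 1 - i - xw c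
  rk : r k = 1
  w0 : ∀ a, a < i → w a = 0
  wi : w i = x
  wc : ∀ c, i < c → c ≤ k → r c • w c = ∑ a ∈ Finset.range c, E c a (w a)

namespace WSys

variable {n : ℕ} {E : ℕ → ℕ → Module.End ℂ V} {i k : ℕ} {x : V} {xw r : ℕ → ℂ} {w : ℕ → V}

lemma w3 (S : WSys n E i k x xw r w) : ∀ a, a ≤ k → ∀ c, c < n →
    E c c (w a) = (xw c - (if c = i then 1 else 0) + (if c = a then 1 else 0)) • w a := by
  intro a
  induction a using Nat.strong_induction_on with
  | _ a IH =>
  intro hak c hc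
  have hkn := S.hkn
  rcases lt_trichotomy a i with h | h | h
  · simp [S.w0 a h]
  · subst h
    rw [S.wi, S.wt c hc]; congr 1; ring
  · refine smul_right_injective V (S.rne a h hak) ?_
    simp only
    rw [← map_smul, smul_comm, S.wc a h hak, map_sum, Finset.smul_sum]
    refine Finset.sum_congr rfl fun b hb => ?_
    have hb' := Finset.mem_range.1 hb
    rw [S.rel.app hc hc (by omega) (by omega), IH b hb' (by omega) c hc, map_smul]
    by_cases h1 : c = a
    · subst h1
      have : ¬ b = c := by omega
      have h2 : ¬ c = b := by omega
      simp only [this, h2, if_true, if_false]; module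
    · by_cases h2 : c = b
      · subst h2
        simp only [h1, if_true, if_false]; module
      · have : ¬ b = c := by omega
        simp only [this, h1, h2, if_false]; module

lemma w12 (S : WSys n E i k x xw r w) : ∀ a, a ≤ k →
    (∀ d c, d < c → c < k → E d c (w a) = if a = c then w d else 0) ∧
    (∀ d, d < a → ∑ b ∈ Finset.range a, E d b (w b) = (xw i + a - 1 - i) • w d) := by
  intro a
  induction a using Nat.strong_induction_on with
  | _ a IH =>
  intro hak
  have hkn := S.hkn
  have hik := S.hik
  have W2 : ∀ d, d < a → ∑ b ∈ Finset.range a, E d b (w b) = (xw i + a - 1 - i) • w d := by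
    intro d hd
    have h1 : ∑ b ∈ Finset.Ico (d + 1) a, E d b (w b) = ((a : ℂ) - d - 1) • w d := by
      rw [Finset.sum_congr rfl (g := fun _ => w d)]
      · rw [Finset.sum_const, Nat.card_Ico, ← Nat.cast_smul_eq_nsmul ℂ, Nat.cast_sub (by omega)]
        congr 1; push_cast; ring
      · intro b hb
        rw [Finset.mem_Ico] at hb
        rw [(IH b hb.2 (by omega)).1 d b (by omega) (by omega), if_pos rfl]
    rw [← Finset.sum_range_add_sum_Ico _ (show d + 1 ≤ a by omega), h1, Finset.sum_range_succ,
      S.w3 d (by omega) d (by omega)]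
    rcases lt_trichotomy d i with h | h | h
    · rw [S.w0 d h, Finset.sum_eq_zero]
      · simp
      · intro b hb
        rw [S.w0 b (by have := Finset.mem_range.1 hb; omega), map_zero]
    · rw [Finset.sum_eq_zero]
      · subst h; simp only [if_true]; module
      · intro b hb
        rw [S.w0 b (by have := Finset.mem_range.1 hb; omega), map_zero]
    · rw [← S.wc d h (by omega), S.req d h (by omega)]
      have : ¬ d = i := by omega
      simp only [this, if_true, if_false]
      module
  refine ⟨?_, W2⟩
  intro d c hdc hck
  rcases lt_trichotomy a i with h | h | h
  · rw [S.w0 a h, map_zero]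
    split_ifs with h1
    · rw [S.w0 d (by omega)]
    · rfl
  · rw [h, S.wi, S.sing d c hdc hck]
    split_ifs with h1
    · rw [S.w0 d (by omega)]
    · rfl
  · refine smul_right_injective V (S.rne a h hak) ?_
    simp only
    rw [← map_smul, S.wc a h hak, map_sum]
    have e1 : ∀ b ∈ Finset.range a, E d c (E a b (w b)) =
        (if b = c then E a b (w d) else 0) + ((if c = a then E d b (w b) else 0)
          - (if b = d then E a c (w b) else 0)) := by
      intro b hb
      have hb' := Finset.mem_range.1 hb
      rw [S.rel.app (by omega) (by omega) (by omega) (by omega),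
        (IH b hb' (by omega)).1 d c hdc hck]
      congr 1
      split_ifs <;> simp
    rw [Finset.sum_congr rfl e1, Finset.sum_add_distrib, Finset.sum_sub_distrib,
      Finset.sum_ite_eq', Finset.sum_ite_eq']
    simp only [Finset.mem_range]
    rcases lt_trichotomy c a with h2 | h2 | h2
    · have h3 : ¬ c = a := by omega
      have h4 : ¬ a = c := by omega
      have h5 : d < a := by omega
      simp [h2, h3, h4, h5]
    · subst h2
      have h3 : ¬ c = i := by omega
      have h4 : ¬ c = d := by omega
      simp only [hdc, if_true, lt_irrefl, if_false, W2 d hdc]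
      rw [S.w3 d (by omega) c (by omega), S.req c h hck]
      simp only [h3, h4, if_false]
      module
    · have h3 : ¬ c = a := by omega
      have h4 : ¬ a = c := by omega
      have h5 : ¬ c < a := by omega
      simp only [h3, h4, h5, if_false]
      split_ifs with h6
      · rw [(IH d h6 (by omega)).1 a c h2 hck, if_neg (by omega)]; simp
      · simp

lemma w1 (S : WSys n E i k x xw r w) {a : ℕ} (ha : a ≤ k) {d c : ℕ} (hdc : d < c) (hc : c < k) :
    E d c (w a) = if a = c then w d else 0 := (S.w12 a ha).1 d c hdc hc

lemma w2 (S : WSys n E i k x xw r w) {a : ℕ} (ha : a ≤ k) {d : ℕ} (hd : d < a) :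
    ∑ b ∈ Finset.range a, E d b (w b) = (xw i + a - 1 - i) • w d := (S.w12 a ha).2 d hd

lemma w5 (S : WSys n E i k x xw r w) : ∀ a, a ≤ k → ∀ d, d < i → E d k (w a) = 0 := by
  intro a
  induction a using Nat.strong_induction_on with
  | _ a IH =>
  intro hak d hd
  have hkn := S.hkn
  have hik := S.hik
  rcases lt_trichotomy a i with h | h | h
  · rw [S.w0 a h, map_zero]
  · rw [h, S.wi, S.singk d hd]
  · refine smul_right_injective V (S.rne a h hak) ?_
    simp only
    rw [← map_smul, S.wc a h hak, map_sum, smul_zero]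
    have e1 : ∀ b ∈ Finset.range a, E d k (E a b (w b)) = if k = a then E d b (w b) else 0 := by
      intro b hb
      have hb' := Finset.mem_range.1 hb
      rw [S.rel.app (by omega) (by omega) (by omega) (by omega), IH b hb' (by omega) d hd]
      have : (if b = d then E a k (w b) else 0) = 0 := by
        split_ifs with h1
        · rw [S.w0 b (by omega), map_zero]
        · rfl
      rw [this]; simp
    rw [Finset.sum_congr rfl e1]
    split_ifs with h1
    · rw [S.w2 hak (by omega), S.w0 d hd, smul_zero]
    · simp

lemma f1 (S : WSys n E i k x xw r w) {a c : ℕ} (hia : i < a) (ha : a < k) (hc : c < k) :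
    r a • E c k (w a) = ∑ b ∈ Finset.range a, E a b (E c k (w b))
      - (if c < a then E a k (w c) else 0) := by
  have hkn := S.hkn
  have hik := S.hik
  rw [← map_smul, S.wc a hia ha.le, map_sum]
  have e1 : ∀ b ∈ Finset.range a, E c k (E a b (w b)) = E a b (E c k (w b))
      - (if b = c then E a k (w b) else 0) := by
    intro b hb
    have hb' := Finset.mem_range.1 hb
    have : ¬ k = a := by omega
    rw [S.rel.app (by omega) (by omega) (by omega) (by omega)]
    simp only [this, if_false]; abel
  rw [Finset.sum_congr rfl e1, Finset.sum_sub_distrib, Finset.sum_ite_eq']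
  simp only [Finset.mem_range]

lemma symK (S : WSys n E i k x xw r w)
    (F2 : ∀ a, i < a → a < k → ∑ b ∈ Finset.range a, E a b (E b k x) = (r a + 1) • E a k x) :
    ∀ a, a < k → ∀ c, c < a → (∑ b ∈ Finset.range a, E a b (E c k (w b)) = (r a + 1) • E a k (w c))
      ∧ E c k (w a) = E a k (w c) := by
  intro a
  have hkn := S.hkn
  have hik := S.hik
  induction a using Nat.strong_induction_on with
  | _ a IH =>
  intro ha
  have sy : ∀ b d, b < a → d < a → E b k (w d) = E d k (w b) := by
    intro b d hb hd
    rcases lt_trichotomy b d with h | h | h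
    · exact (IH d hd (by omega) b h).2
    · rw [h]
    · exact ((IH b hb (by omega) d h).2).symm
  have K : ∀ c, c < a →
      (∑ b ∈ Finset.range a, E a b (E c k (w b)) = (r a + 1) • E a k (w c)) := by
    intro c
    induction c using Nat.strong_induction_on with
    | _ c IHc =>
    intro hca
    rcases lt_trichotomy c i with h | h | h
    · rw [S.w0 c h, map_zero, smul_zero]
      refine Finset.sum_eq_zero fun b hb => ?_
      have hb' := Finset.mem_range.1 hb
      rw [S.w5 b (by omega) c h, map_zero]
    · subst h
      rw [S.wi, ← F2 a hca ha]
      refine Finset.sum_congr rfl fun b hb => ?_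
      have hb' := Finset.mem_range.1 hb
      rw [sy c b hca hb', S.wi]
    · refine smul_right_injective V (S.rne c h (by omega)) ?_
      simp only
      have e1 : ∀ b ∈ Finset.range a, r c • E a b (E c k (w b)) =
          ∑ d ∈ Finset.range c, E c d (E a b (E d k (w b))) +
          ((if b = c then ∑ d ∈ Finset.range c, E a d (E c k (w d)) else 0)
           - (if b < c then E a b (E c k (w b)) else 0)) := by
        intro b hb
        have hb' := Finset.mem_range.1 hb
        rw [← map_smul, sy c b hca hb', S.f1 h (by omega) (by omega), map_sub, map_sum]
        have e2 : ∀ d ∈ Finset.range c, E a b (E c d (E b k (w d))) =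
            E c d (E a b (E d k (w b))) + (if b = c then E a d (E c k (w d)) else 0) := by
          intro d hd
          have hd' := Finset.mem_range.1 hd
          have : ¬ d = a := by omega
          rw [S.rel.app (by omega) (by omega) (by omega) (by omega), sy b d hb' (by omega)]
          simp only [this, if_false, sub_zero]
          congr 1
          split_ifs with hbc
          · rw [hbc, sy d c (by omega) (by omega)]
          · rfl
        rw [Finset.sum_congr rfl e2, Finset.sum_add_distrib, add_sub_assoc, apply_ite (E a b), map_zero]
        congr 2
        · split_ifs <;> simp
        · rw [sy b c hb' hca]
      rw [Finset.smul_sum, Finset.sum_congr rfl e1, Finset.sum_add_distrib,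
        Finset.sum_sub_distrib, Finset.sum_ite_eq', if_pos (Finset.mem_range.2 hca),
        Finset.sum_comm]
      have e3 : ∑ b ∈ Finset.range a, (if b < c then E a b (E c k (w b)) else 0) =
          ∑ d ∈ Finset.range c, E a d (E c k (w d)) := by
        rw [← Finset.sum_filter]
        refine Finset.sum_congr ?_ fun _ _ => rfl
        ext b; simp only [Finset.mem_filter, Finset.mem_range]; omega
      rw [e3, sub_self, add_zero]
      have e4 : ∀ d ∈ Finset.range c, ∑ b ∈ Finset.range a, E c d (E a b (E d k (w b))) =
          (r a + 1) • E c d (E a k (w d)) := by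
        intro d hd
        have hd' := Finset.mem_range.1 hd
        rw [← map_sum, IHc d hd' (by omega), map_smul]
      have e5 := S.f1 (c := a) h (by omega) ha
      rw [if_neg (by omega), sub_zero] at e5
      rw [Finset.sum_congr rfl e4, ← Finset.smul_sum, ← e5, smul_comm]
  intro c hca
  refine ⟨K c hca, ?_⟩
  by_cases h : i < a
  · refine smul_right_injective V (S.rne a h (by omega)) ?_
    simp only
    rw [S.f1 h ha (by omega), K c hca, if_pos hca]; module
  · rw [S.w0 c (by omega), S.w5 a (by omega) c (by omega), map_zero]

lemma sym (S : WSys n E i k x xw r w)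
    (F2 : ∀ a, i < a → a < k → ∑ b ∈ Finset.range a, E a b (E b k x) = (r a + 1) • E a k x)
    {a c : ℕ} (ha : a < k) (hc : c < k) : E c k (w a) = E a k (w c) := by
  rcases lt_trichotomy c a with h | h | h
  · exact (S.symK F2 a ha c h).2
  · rw [h]
  · exact ((S.symK F2 c hc a h).2).symm

lemma gg (S : WSys n E i k x xw r w)
    (F2 : ∀ a, i < a → a < k → ∑ b ∈ Finset.range a, E a b (E b k x) = (r a + 1) • E a k x)
    {κ : ℂ} (F3 : ∑ a ∈ Finset.range k, E k a (E a k x) = κ • x) :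
    ∀ c, c < k → ∑ a ∈ Finset.range k, E k a (E c k (w a)) = κ • w c := by
  intro c
  have hkn := S.hkn
  have hik := S.hik
  induction c using Nat.strong_induction_on with
  | _ c IH =>
  intro hck
  rcases lt_trichotomy c i with h | h | h
  · rw [S.w0 c h, smul_zero]
    refine Finset.sum_eq_zero fun b hb => ?_
    have hb' := Finset.mem_range.1 hb
    rw [S.w5 b (by omega) c h, map_zero]
  · subst h
    rw [S.wi, ← F3]
    refine Finset.sum_congr rfl fun b hb => ?_
    have hb' := Finset.mem_range.1 hb
    rw [S.sym F2 hb' hck, S.wi]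
  · refine smul_right_injective V (S.rne c h (by omega)) ?_
    simp only
    have e1 : ∀ a ∈ Finset.range k, r c • E k a (E c k (w a)) =
        ∑ b ∈ Finset.range c, E c b (E k a (E b k (w a))) +
        ((if a = c then ∑ b ∈ Finset.range c, E k b (E c k (w b)) else 0)
         - (if a < c then E k a (E c k (w a)) else 0)) := by
      intro a ha
      have ha' := Finset.mem_range.1 ha
      rw [← map_smul, S.sym F2 ha' hck, S.f1 h (by omega) (by omega), map_sub, map_sum]
      have e2 : ∀ b ∈ Finset.range c, E k a (E c b (E a k (w b))) =
          E c b (E k a (E b k (w a))) + (if a = c then E k b (E c k (w b)) else 0) := by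
        intro b hb
        have hb' := Finset.mem_range.1 hb
        have : ¬ b = k := by omega
        rw [S.rel.app (by omega) (by omega) (by omega) (by omega), S.sym F2 (a := b) (c := a)
          (by omega) (by omega)]
        simp only [this, if_false, sub_zero]
        congr 1
        split_ifs with hbc
        · rw [hbc, S.sym F2 (a := c) (c := b) (by omega) (by omega)]
        · rfl
      rw [Finset.sum_congr rfl e2, Finset.sum_add_distrib, add_sub_assoc, apply_ite (E k a), map_zero]
      congr 2
      · split_ifs <;> simp
      · rw [S.sym F2 hck ha']
    rw [Finset.smul_sum, Finset.sum_congr rfl e1, Finset.sum_add_distrib,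
      Finset.sum_sub_distrib, Finset.sum_ite_eq', if_pos (Finset.mem_range.2 hck),
      Finset.sum_comm]
    have e3 : ∑ b ∈ Finset.range k, (if b < c then E k b (E c k (w b)) else 0) =
        ∑ d ∈ Finset.range c, E k d (E c k (w d)) := by
      rw [← Finset.sum_filter]
      refine Finset.sum_congr ?_ fun _ _ => rfl
      ext b; simp only [Finset.mem_filter, Finset.mem_range]; omega
    rw [e3, sub_self, add_zero]
    have e4 : ∀ d ∈ Finset.range c, ∑ b ∈ Finset.range k, E c d (E k b (E d k (w b))) =
        κ • E c d (w d) := by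
      intro d hd
      have hd' := Finset.mem_range.1 hd
      rw [← map_sum, IH d hd' (by omega), map_smul]
    rw [Finset.sum_congr rfl e4, ← Finset.smul_sum, ← S.wc c h (by omega), smul_comm]

lemma top (S : WSys n E i k x xw r w)
    (F2 : ∀ a, i < a → a < k → ∑ b ∈ Finset.range a, E a b (E b k x) = (r a + 1) • E a k x)
    {κ : ℂ} (F3 : ∑ a ∈ Finset.range k, E k a (E a k x) = κ • x) {c : ℕ} (hc : c < k) :
    E c k (w k) = (κ + (xw i + k - 1 - i - xw k)) • w c := by
  have hkn := S.hkn
  have hik := S.hik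
  have e0 := S.wc k hik le_rfl
  rw [S.rk, one_smul] at e0
  rw [e0, map_sum]
  have e1 : ∀ a ∈ Finset.range k, E c k (E k a (w a)) = E k a (E c k (w a)) +
      (E c a (w a) - (if a = c then E k k (w a) else 0)) := by
    intro a ha
    have ha' := Finset.mem_range.1 ha
    rw [S.rel.app (by omega) (by omega) (by omega) (by omega)]
    simp only [if_true]
  rw [Finset.sum_congr rfl e1, Finset.sum_add_distrib, Finset.sum_sub_distrib, Finset.sum_ite_eq',
    if_pos (Finset.mem_range.2 hc), S.gg F2 F3 c hc, S.w2 le_rfl hc, S.w3 c (by omega) k (by omega),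
    if_neg (by omega), if_neg (by omega)]
  module

end WSys

end Lowering

section XOp

variable {U V : Type} [AddCommGroup U] [Module ℂ U] [AddCommGroup V] [Module ℂ V]

/-- A highest weight vector. -/
structure HW (n : ℕ) (E : ℕ → ℕ → Module.End ℂ U) (ξ : U) (lam : ℕ → ℂ) : Prop where
  rel : GLRel n E
  up : ∀ a b, a < b → b < n → E a b ξ = 0
  diag : ∀ a, a < n → E a a ξ = lam a • ξ

/-- The off-diagonal series entry `u t^{(1)} + t^{(2)}`. -/
noncomputable def TT (n : ℕ) (E : ℕ → ℕ → Module.End ℂ U) (F : ℕ → ℕ → Module.End ℂ V) (u : ℂ)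
    (i j : ℕ) : Module.End ℂ (U ⊗[ℂ] V) := u • tau1 E F i j + tau2 n E F i j

variable {n : ℕ} {E : ℕ → ℕ → Module.End ℂ U} {F : ℕ → ℕ → Module.End ℂ V}
  {ξ : U} {lam : ℕ → ℂ}

lemma tau_yrel (hE : GLRel n E) (hF : GLRel n F) : YRel n (tau1 E F) (tau2 n E F) :=
  ⟨tau_a hE hF, tau_b hE hF, tau_c hE hF⟩

lemma TT_tr (u : ℂ) {i j : ℕ} (hi : i < n) (hj : j < n) :
    Tr n (tau1 E F) (tau2 n E F) (TT n E F u i j) (TT n E F u j i) :=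
  .add (.smul u (.gen1 i j hi hj)) (.gen2 i j hi hj)

lemma HW.tau2 (H : HW n E ξ lam) {i : ℕ} (hi : i < n) (j : ℕ) (v : V) :
    tau2 n E F i j (ξ ⊗ₜ[ℂ] v) = ∑ a ∈ Finset.range i, E i a ξ ⊗ₜ[ℂ] F a j v
      + lam i • (ξ ⊗ₜ[ℂ] F i j v) := by
  rw [tau2_tmul, ← Finset.sum_range_add_sum_Ico _ (show i + 1 ≤ n by omega),
    Finset.sum_range_succ, H.diag i hi, TensorProduct.smul_tmul', Finset.sum_eq_zero (s := Finset.Ico _ _),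
    add_zero]
  intro b hb
  rw [Finset.mem_Ico] at hb
  rw [H.up i b (by omega) hb.2, TensorProduct.zero_tmul]

lemma lowerT (H : HW n E ξ lam) {i k : ℕ} {x : V} {xw r : ℕ → ℂ} {w : ℕ → V}
    (S : WSys n F i k x xw r w) {c : ℕ} (hic : i < c) (hck : c ≤ k) (u : ℂ)
    (hu : u = -(xw i + c - 1 - i)) :
    ∑ a ∈ Finset.range c, TT n E F u c a (ξ ⊗ₜ[ℂ] w a) =
      ((u + lam c) * r c) • (ξ ⊗ₜ[ℂ] w c) := by
  have hkn := S.hkn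
  have e1 : ∀ a ∈ Finset.range c, TT n E F u c a (ξ ⊗ₜ[ℂ] w a) =
      u • (E c a ξ ⊗ₜ[ℂ] w a) + (∑ d ∈ Finset.range c, E c d ξ ⊗ₜ[ℂ] F d a (w a)
        + (u + lam c) • (ξ ⊗ₜ[ℂ] F c a (w a))) := by
    intro a ha
    simp only [TT, LinearMap.add_apply, LinearMap.smul_apply, tau1_tmul, H.tau2 (show c < n by omega)]
    module
  have e2 : ∀ d ∈ Finset.range c, ∑ a ∈ Finset.range c, E c d ξ ⊗ₜ[ℂ] F d a (w a) =
      -(u • (E c d ξ ⊗ₜ[ℂ] w d)) := by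
    intro d hd
    rw [← TensorProduct.tmul_sum, S.w2 hck (Finset.mem_range.1 hd), TensorProduct.tmul_smul, hu]
    module
  rw [Finset.sum_congr rfl e1, Finset.sum_add_distrib, Finset.sum_add_distrib, Finset.sum_comm,
    Finset.sum_congr rfl e2, Finset.sum_neg_distrib, ← Finset.smul_sum (s := Finset.range c) (f := fun a =>
      ξ ⊗ₜ[ℂ] F c a (w a)), ← TensorProduct.tmul_sum,
    ← S.wc c hic hck, TensorProduct.tmul_smul]
  module

/-- Vectors to which the transposed operators are applied. -/
structure Good (n : ℕ) (F : ℕ → ℕ → Module.End ℂ V) (i k : ℕ) (xw : ℕ → ℂ) (y : V) : Prop where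
  sing : ∀ d c, d < c → c < k → F d c y = 0
  singk : ∀ d, d < i → F d k y = 0
  wt : ∀ c, i < c → c < k → F c c y = xw c • y

lemma Good.up1 (H : HW n E ξ lam) {i k : ℕ} {xw : ℕ → ℂ} {y : V} (G : Good n F i k xw y)
    (hk : k < n) {a c : ℕ} (hac : a < c) (hc : c < k) : tau1 E F a c (ξ ⊗ₜ[ℂ] y) = 0 := by
  rw [tau1_tmul, H.up a c hac (by omega), G.sing a c hac hc]; simp

lemma Good.up2 (H : HW n E ξ lam) {i k : ℕ} {xw : ℕ → ℂ} {y : V} (G : Good n F i k xw y)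
    (hk : k < n) {a c : ℕ} (hac : a < c) (hc : c < k) : tau2 n E F a c (ξ ⊗ₜ[ℂ] y) = 0 := by
  rw [H.tau2 (by omega), G.sing a c hac hc, Finset.sum_eq_zero]
  · simp
  · intro b hb
    have := Finset.mem_range.1 hb
    rw [G.sing b c (by omega) hc, TensorProduct.tmul_zero]

lemma Good.d1 (H : HW n E ξ lam) {i k : ℕ} {xw : ℕ → ℂ} {y : V} (G : Good n F i k xw y)
    (hk : k < n) {c : ℕ} (hic : i < c) (hc : c < k) :
    tau1 E F c c (ξ ⊗ₜ[ℂ] y) = (lam c + xw c) • (ξ ⊗ₜ[ℂ] y) := by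
  rw [tau1_tmul, H.diag c (by omega), G.wt c hic hc, TensorProduct.tmul_smul,
    ← TensorProduct.smul_tmul']
  module

lemma Good.d2 (H : HW n E ξ lam) {i k : ℕ} {xw : ℕ → ℂ} {y : V} (G : Good n F i k xw y)
    (hk : k < n) {c : ℕ} (hic : i < c) (hc : c < k) :
    tau2 n E F c c (ξ ⊗ₜ[ℂ] y) = (lam c * xw c) • (ξ ⊗ₜ[ℂ] y) := by
  rw [H.tau2 (by omega), G.wt c hic hc, Finset.sum_eq_zero]
  · rw [TensorProduct.tmul_smul]; module
  · intro b hb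
    have := Finset.mem_range.1 hb
    rw [G.sing b c (by omega) hc, TensorProduct.tmul_zero]

lemma Good.ik (H : HW n E ξ lam) {i k : ℕ} {xw : ℕ → ℂ} {y : V} (G : Good n F i k xw y)
    (hik : i < k) (hk : k < n) (v : ℂ) :
    TT n E F v i k (ξ ⊗ₜ[ℂ] y) = (v + lam i) • (ξ ⊗ₜ[ℂ] F i k y) := by
  simp only [TT, LinearMap.add_apply, LinearMap.smul_apply, tau1_tmul, H.tau2 (show i < n by omega),
    H.up i k hik hk]
  rw [Finset.sum_eq_zero]
  · rw [TensorProduct.zero_tmul]; module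
  · intro b hb
    have := Finset.mem_range.1 hb
    rw [G.singk b this, TensorProduct.tmul_zero]

lemma Good.zero_k (H : HW n E ξ lam) {i k : ℕ} {xw : ℕ → ℂ} {y : V} (G : Good n F i k xw y)
    (hik : i < k) (hk : k < n) (v : ℂ) {a : ℕ} (ha : a < i) :
    TT n E F v a k (ξ ⊗ₜ[ℂ] y) = 0 := by
  simp only [TT, LinearMap.add_apply, LinearMap.smul_apply, tau1_tmul, H.tau2 (show a < n by omega),
    H.up a k (by omega) hk, G.singk a ha]
  rw [Finset.sum_eq_zero]
  · simp
  · intro b hb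
    have := Finset.mem_range.1 hb
    rw [G.singk b (by omega), TensorProduct.tmul_zero]

lemma Good.cross (H : HW n E ξ lam) (hF : GLRel n F) {i k : ℕ} {xw : ℕ → ℂ} {y : V}
    (G : Good n F i k xw y) (hk : k < n) {a c : ℕ} (hac : a < c) (hic : i < c) (hc : c < k)
    (u v : ℂ) :
    (u - v) • TT n E F u a c (TT n E F v c k (ξ ⊗ₜ[ℂ] y)) =
      ((u + lam c) * (u + xw c)) • TT n E F v a k (ξ ⊗ₜ[ℂ] y)
      - ((v + lam c) * (v + xw c)) • TT n E F u a k (ξ ⊗ₜ[ℂ] y) := by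
  have R := tau_yrel H.rel hF
  set ζ := ξ ⊗ₜ[ℂ] y with hζ
  have ap : ∀ {X Y : Module.End ℂ (U ⊗[ℂ] V)}, X = Y → X ζ = Y ζ := fun h => by rw [h]
  have n1 : ¬ k = a := by omega
  have n2 : ¬ c = a := by omega
  have n3 : ¬ k = c := by omega
  have e1 := ap (R.a a c c k (by omega) (by omega) (by omega) (by omega))
  have e2 := ap (R.b a c c k (by omega) (by omega) (by omega) (by omega))
  have e3 := ap (R.b c k a c (by omega) (by omega) (by omega) (by omega))
  have e4 := ap (R.c a c c k (by omega) (by omega) (by omega) (by omega))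
  have e5 := ap (R.b c c a k (by omega) (by omega) (by omega) (by omega))
  have e6 := ap (R.b a k c c (by omega) (by omega) (by omega) (by omega))
  simp only [Module.End.mul_apply, LinearMap.add_apply, LinearMap.sub_apply, n1, n2, n3,
    if_true, if_false, LinearMap.zero_apply, hζ, G.up1 H hk hac hc, G.up2 H hk hac hc,
    G.d1 H hk hic hc, G.d2 H hk hic hc, map_zero, map_smul] at e1 e2 e3 e4 e5 e6
  rw [← hζ] at e1 e2 e3 e4 e5 e6
  rw [e5] at e4
  simp only [TT, LinearMap.add_apply, LinearMap.smul_apply, map_add, map_smul, e1, e2, e4]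
  have e3' : tau2 n E F a c (tau1 E F c k ζ) = tau2 n E F a k ζ := by
    rw [zero_sub] at e3
    exact add_neg_eq_zero.1 e3.symm
  have e6' : tau2 n E F c c (tau1 E F a k ζ) = (lam c * xw c) • tau1 E F a k ζ := by
    rw [e6]; abel
  rw [e3', e6']
  module

lemma xop_aux (H : HW n E ξ lam) {i k : ℕ} {x : V} {xw r : ℕ → ℂ} {w : ℕ → V}
    (S : WSys n F i k x xw r w) : ∀ t : ℕ, i + 1 + t ≤ k →
    ∃ (Y Y' : ℕ → Module.End ℂ (U ⊗[ℂ] V)) (p : ℂ) (s : ℕ → ℂ),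
      (∀ a < i + 1 + t, Tr n (tau1 E F) (tau2 n E F) (Y a) (Y' a)) ∧
      (∀ a < i + 1 + t, Y a (ξ ⊗ₜ[ℂ] x) = p • (ξ ⊗ₜ[ℂ] w a)) ∧
      (∀ y, Good n F i k xw y → ∀ m : ℕ, ∑ a ∈ Finset.range (i + 1 + t),
        Y' a (TT n E F (-(xw i + t) - m) a k (ξ ⊗ₜ[ℂ] y)) = s m • (ξ ⊗ₜ[ℂ] F i k y)) ∧
      p = ∏ c ∈ Finset.Ioo i (i + 1 + t), (lam c - (xw i + c - 1 - i)) ∧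
      s 0 = (∏ c ∈ Finset.Ioo i (i + 1 + t), (1 + (r c)⁻¹)) *
        ∏ c ∈ Finset.Ico i (i + 1 + t), (lam c - (xw i + c - i)) := by
  have hkn := S.hkn
  have hik := S.hik
  intro t
  induction t with
  | zero =>
    intro _
    refine ⟨fun a => if a = i then 1 else 0, fun a => if a = i then 1 else 0, 1,
      fun m => -xw i - m + lam i, ?_, ?_, ?_, ?_, ?_⟩
    · intro a ha
      dsimp only
      split_ifs
      · exact .one
      · exact .zero
    · intro a ha
      by_cases h : a = i
      · simp [h, S.wi]
      · simp [h, S.w0 a (by omega)]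
    · intro y G m
      rw [Finset.sum_eq_single i]
      · simp only [if_true, Module.End.one_apply]
        rw [G.ik H hik hkn]; congr 1; push_cast; ring
      · intro b _ hb; simp [hb]
      · intro h; simp at h
    · have : Finset.Ioo i (i + 1 + 0) = ∅ := by ext; simp
      rw [this]; simp
    · have h1 : Finset.Ioo i (i + 1 + 0) = ∅ := by ext; simp
      have h2 : Finset.Ico i (i + 1 + 0) = {i} := by ext; simp
      rw [h1, h2]; simp; ring
  | succ t ih =>
    intro htk
    obtain ⟨Y, Y', p, s, h1, h2, h3, h4, h5⟩ := ih (by omega)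
    set c := i + 1 + t with hc
    have hck : c < k := by omega
    have hic : i < c := by omega
    set u : ℂ := -(xw i + t) with hu
    have hcc : (c : ℂ) = i + 1 + t := by rw [hc]; push_cast; ring
    have hu' : u = -(xw i + c - 1 - i) := by rw [hu, hcc]; ring
    have hr0 := S.rne c hic hck.le
    have hr := S.req c hic hck
    have hux : u + xw c = - r c := by rw [hu', hr]; ring
    have I1 : Finset.Ioo i (i + 1 + (t + 1)) = insert c (Finset.Ioo i c) := by
      ext b; simp only [Finset.mem_Ioo, Finset.mem_insert]; omega
    have I2 : Finset.Ico i (i + 1 + (t + 1)) = insert c (Finset.Ico i c) := by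
      ext b; simp only [Finset.mem_Ico, Finset.mem_insert]; omega
    refine ⟨fun a => if a = c then (r c)⁻¹ • ∑ b ∈ Finset.range c, TT n E F u c b * Y b
        else (u + lam c) • Y a,
      fun a => if a = c then (r c)⁻¹ • ∑ b ∈ Finset.range c, Y' b * TT n E F u b c
        else (u + lam c) • Y' a, (u + lam c) * p,
      fun m => (u + lam c) * s (m + 1) + (r c)⁻¹ * (m + 1 : ℂ)⁻¹ *
        (((u + lam c) * (u + xw c)) * s (m + 1) -
          ((u - (m + 1) + lam c) * (u - (m + 1) + xw c)) * s 0), ?_, ?_, ?_, ?_, ?_⟩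
    · intro a ha
      dsimp only
      split_ifs with h
      · refine .smul _ (Tr.sum _ fun b hb => ?_)
        have hb' := Finset.mem_range.1 hb
        exact .mul (TT_tr u (by omega) (by omega)) (h1 b hb')
      · exact .smul _ (h1 a (by omega))
    · intro a ha
      dsimp only
      split_ifs with h
      · rw [h, LinearMap.smul_apply, LinearMap.sum_apply]
        have : ∀ b ∈ Finset.range c, (TT n E F u c b * Y b) (ξ ⊗ₜ[ℂ] x) =
            p • TT n E F u c b (ξ ⊗ₜ[ℂ] w b) := by
          intro b hb
          rw [Module.End.mul_apply, h2 b (Finset.mem_range.1 hb), map_smul]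
        rw [Finset.sum_congr rfl this, ← Finset.smul_sum, lowerT H S hic hck.le u hu', smul_smul,
          smul_smul]
        congr 1; field_simp
      · rw [LinearMap.smul_apply, h2 a (by omega), smul_smul]
    · intro y G m
      have ev : (-(xw i + ((t + 1 : ℕ) : ℂ)) - (m : ℂ)) = u - ((m + 1 : ℕ) : ℂ) := by
        rw [hu]; push_cast; ring
      rw [ev]
      have hrange : i + 1 + (t + 1) = c + 1 := by omega
      rw [hrange, Finset.sum_range_succ]
      dsimp only
      have e1 : ∀ a ∈ Finset.range c, (if a = c then (r c)⁻¹ • ∑ b ∈ Finset.range c,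
          Y' b * TT n E F u b c else (u + lam c) • Y' a)
          (TT n E F (u - ((m + 1 : ℕ) : ℂ)) a k (ξ ⊗ₜ[ℂ] y)) =
          (u + lam c) • Y' a (TT n E F (u - ((m + 1 : ℕ) : ℂ)) a k (ξ ⊗ₜ[ℂ] y)) := by
        intro a ha
        have := Finset.mem_range.1 ha
        rw [if_neg (by omega), LinearMap.smul_apply]
      rw [Finset.sum_congr rfl e1, ← Finset.smul_sum, h3 y G (m + 1), if_pos rfl,
        LinearMap.smul_apply, LinearMap.sum_apply]
      have hm : ((m : ℂ) + 1) ≠ 0 := by exact_mod_cast Nat.succ_ne_zero m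
      have e2 : ∀ b ∈ Finset.range c, (Y' b * TT n E F u b c)
          (TT n E F (u - ((m + 1 : ℕ) : ℂ)) c k (ξ ⊗ₜ[ℂ] y)) =
          ((m + 1 : ℂ)⁻¹ * ((u + lam c) * (u + xw c))) •
            Y' b (TT n E F (u - ((m + 1 : ℕ) : ℂ)) b k (ξ ⊗ₜ[ℂ] y)) -
          ((m + 1 : ℂ)⁻¹ * ((u - (m + 1) + lam c) * (u - (m + 1) + xw c))) •
            Y' b (TT n E F (u - ((0 : ℕ) : ℂ)) b k (ξ ⊗ₜ[ℂ] y)) := by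
        intro b hb
        have hb' := Finset.mem_range.1 hb
        have := G.cross H S.rel hkn hb' hic hck u (u - ((m + 1 : ℕ) : ℂ))
        have e3 : TT n E F u b c (TT n E F (u - ((m + 1 : ℕ) : ℂ)) c k (ξ ⊗ₜ[ℂ] y)) =
          ((m + 1 : ℂ)⁻¹ * ((u + lam c) * (u + xw c))) •
            (TT n E F (u - ((m + 1 : ℕ) : ℂ)) b k (ξ ⊗ₜ[ℂ] y)) -
          ((m + 1 : ℂ)⁻¹ * ((u - (m + 1) + lam c) * (u - (m + 1) + xw c))) •
            (TT n E F u b k (ξ ⊗ₜ[ℂ] y)) := by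
          refine smul_right_injective _ hm ?_
          have e4 : u - (u - ((m + 1 : ℕ) : ℂ)) = (m : ℂ) + 1 := by push_cast; ring
          rw [e4] at this
          simp only
          rw [this, smul_sub, smul_smul, smul_smul, mul_inv_cancel_left₀ hm,
            mul_inv_cancel_left₀ hm]
          push_cast
          rfl
        rw [Module.End.mul_apply, e3, map_sub, map_smul, map_smul]
        simp
      rw [Finset.sum_congr rfl e2, Finset.sum_sub_distrib, ← Finset.smul_sum, ← Finset.smul_sum,
        h3 y G (m + 1), h3 y G 0]
      module
    · rw [I1, Finset.prod_insert (by simp), h4, hu']; ring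
    · rw [I1, I2, Finset.prod_insert (by simp), Finset.prod_insert (by simp)]
      dsimp only
      have e6 : u - (((0 : ℕ) : ℂ) + 1) + xw c = - r c - 1 := by
        push_cast; linear_combination hux
      have e7 : lam c - (xw i + c - i) = u - 1 + lam c := by rw [hu']; ring
      rw [hux, e6, e7]
      have e8 : (1 + (r c)⁻¹) * (∏ c ∈ Finset.Ioo i c, (1 + (r c)⁻¹)) *
          ((u - 1 + lam c) * ∏ c ∈ Finset.Ico i c, (lam c - (xw i + c - i))) =
          (1 + (r c)⁻¹) * (u - 1 + lam c) * s 0 := by rw [h5]; ring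
      rw [e8]
      push_cast
      field_simp
      ring

lemma xop (H : HW n E ξ lam) {i k : ℕ} {x : V} {xw r : ℕ → ℂ} {w : ℕ → V}
    (S : WSys n F i k x xw r w) :
    ∃ X X' : Module.End ℂ (U ⊗[ℂ] V), Tr n (tau1 E F) (tau2 n E F) X X' ∧
      X (ξ ⊗ₜ[ℂ] x) = (∏ c ∈ Finset.Ioc i k, (lam c - (xw i + c - 1 - i))) • (ξ ⊗ₜ[ℂ] w k) ∧
      ∀ y, Good n F i k xw y → X' (ξ ⊗ₜ[ℂ] y) = ((∏ c ∈ Finset.Ioo i k, (1 + (r c)⁻¹)) *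
        ∏ c ∈ Finset.Ico i k, (lam c - (xw i + c - i))) • (ξ ⊗ₜ[ℂ] F i k y) := by
  have hkn := S.hkn
  have hik := S.hik
  obtain ⟨Y, Y', p, s, h1, h2, h3, h4, h5⟩ := xop_aux H S (k - i - 1) (by omega)
  have hk : i + 1 + (k - i - 1) = k := by omega
  rw [hk] at h1 h2 h3 h4 h5
  have hkc : (((k - i - 1 : ℕ)) : ℂ) = k - i - 1 := by
    rw [Nat.cast_sub (by omega), Nat.cast_sub (by omega)]; simp
  set u : ℂ := -(xw i + ((k - i - 1 : ℕ) : ℂ)) with hu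
  have hu' : u = -(xw i + k - 1 - i) := by rw [hu, hkc]; ring
  refine ⟨∑ a ∈ Finset.range k, TT n E F u k a * Y a, ∑ a ∈ Finset.range k, Y' a * TT n E F u a k,
    ?_, ?_, ?_⟩
  · refine Tr.sum _ fun b hb => ?_
    have hb' := Finset.mem_range.1 hb
    exact .mul (TT_tr u (by omega) (by omega)) (h1 b hb')
  · rw [LinearMap.sum_apply]
    have : ∀ b ∈ Finset.range k, (TT n E F u k b * Y b) (ξ ⊗ₜ[ℂ] x) =
        p • TT n E F u k b (ξ ⊗ₜ[ℂ] w b) := by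
      intro b hb
      rw [Module.End.mul_apply, h2 b (Finset.mem_range.1 hb), map_smul]
    have I1 : Finset.Ioc i k = insert k (Finset.Ioo i k) := by
      ext b; simp only [Finset.mem_Ioo, Finset.mem_insert, Finset.mem_Ioc]; omega
    rw [Finset.sum_congr rfl this, ← Finset.smul_sum, lowerT H S hik le_rfl u hu', smul_smul, S.rk,
      I1, Finset.prod_insert (by simp), h4, hu']
    congr 1; ring
  · intro y G
    rw [LinearMap.sum_apply]
    have := h3 y G 0
    simp only [Nat.cast_zero, sub_zero] at this
    simp only [Module.End.mul_apply]
    rw [this, h5]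

end XOp

section Chain

/-- `f` vanishes to order `m` at the origin (in a continuous sense). -/
def HasOrd (f : ℂ → ℂ) (m : ℕ) : Prop :=
  ∃ g : ℂ → ℂ, Continuous g ∧ g 0 ≠ 0 ∧ ∀ z, f z = z ^ m * g z

lemma HasOrd.mul {f g : ℂ → ℂ} {p q : ℕ} (hf : HasOrd f p) (hg : HasOrd g q) :
    HasOrd (fun z => f z * g z) (p + q) := by
  obtain ⟨a, ha, ha0, ha1⟩ := hf
  obtain ⟨b, hb, hb0, hb1⟩ := hg
  refine ⟨fun z => a z * b z, ha.mul hb, mul_ne_zero ha0 hb0, fun z => ?_⟩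
  simp only [ha1, hb1, pow_add]; ring

lemma HasOrd.const {c : ℂ} (hc : c ≠ 0) : HasOrd (fun _ => c) 0 :=
  ⟨fun _ => c, continuous_const, hc, fun z => by simp⟩

lemma HasOrd.prod (s : Finset ℕ) (a : ℕ → ℤ) :
    HasOrd (fun z => ∏ c ∈ s, (z + (a c : ℂ))) (s.filter fun c => a c = 0).card := by
  induction s using Finset.induction_on with
  | empty => simpa using HasOrd.const one_ne_zero
  | insert c s hc ih =>
    have h : HasOrd (fun z => z + (a c : ℂ)) (if a c = 0 then 1 else 0) := by
      split_ifs with h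
      · exact ⟨fun _ => 1, continuous_const, one_ne_zero, fun z => by simp [h]⟩
      · exact ⟨fun z => z + a c, by fun_prop, by simpa using h, fun z => by simp⟩
    have := h.mul ih
    simp only [Finset.prod_insert hc, Finset.filter_insert]
    split_ifs at this ⊢ with h1
    · rw [Finset.card_insert_of_notMem (by simp [hc]), add_comm]; exact this
    · simpa using this

variable {U V : Type} [AddCommGroup U] [Module ℂ U] [AddCommGroup V] [Module ℂ V]

/-- Two vectors linked by transposed pairs of Yangian operators, with orders in the parameter. -/
def LinkO (n : ℕ) (E : ℂ → ℕ → ℕ → Module.End ℂ U) (F : ℕ → ℕ → Module.End ℂ V) (ξ : U)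
    (x y : V) (p q : ℕ) : Prop :=
  ∃ P Q : ℂ → ℂ, HasOrd P p ∧ HasOrd Q q ∧ ∀ z, ∃ X X' : Module.End ℂ (U ⊗[ℂ] V),
    Tr n (tau1 (E z) F) (tau2 n (E z) F) X X' ∧ X (ξ ⊗ₜ[ℂ] x) = P z • (ξ ⊗ₜ[ℂ] y) ∧
    X' (ξ ⊗ₜ[ℂ] y) = Q z • (ξ ⊗ₜ[ℂ] x)

variable {n : ℕ} {E : ℂ → ℕ → ℕ → Module.End ℂ U} {F : ℕ → ℕ → Module.End ℂ V} {ξ : U}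

lemma LinkO.refl (x : V) : LinkO n E F ξ x x 0 0 :=
  ⟨fun _ => 1, fun _ => 1, .const one_ne_zero, .const one_ne_zero,
    fun z => ⟨1, 1, .one, by simp, by simp⟩⟩

lemma LinkO.trans {x y w : V} {p q p' q' : ℕ} (h : LinkO n E F ξ x y p q)
    (h' : LinkO n E F ξ y w p' q') : LinkO n E F ξ x w (p + p') (q + q') := by
  obtain ⟨P, Q, hP, hQ, h⟩ := h
  obtain ⟨P', Q', hP', hQ', h'⟩ := h'
  refine ⟨_, _, hP.mul hP', hQ.mul hQ', fun z => ?_⟩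
  obtain ⟨X, X', hX, h1, h2⟩ := h z
  obtain ⟨Y, Y', hY, h3, h4⟩ := h' z
  refine ⟨Y * X, X' * Y', .mul hY hX, ?_, ?_⟩
  · rw [Module.End.mul_apply, h1, map_smul, h3, smul_smul]
  · rw [Module.End.mul_apply, h4, map_smul, h2, smul_smul]; congr 1; ring

/-- Recursive definition of the lowering system. -/
noncomputable def wfun (F : ℕ → ℕ → Module.End ℂ V) (i : ℕ) (x : V) (r : ℕ → ℂ) (c : ℕ) : V :=
  if c < i then 0 else if c = i then x else
    (r c)⁻¹ • ∑ a : Fin c, F c a (wfun F i x r a)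
termination_by c
decreasing_by exact a.2

/-- The state of a vector during the stage. -/
structure SS (n : ℕ) (F : ℕ → ℕ → Module.End ℂ V) (i k : ℕ) (β : ℂ) (K : ℕ → ℤ) (κ : ℂ) (x : V) :
    Prop where
  rel : GLRel n F
  hik : i < k
  hkn : k < n
  wt : ∀ c, c < n → F c c x = (β + K c + c) • x
  sing : ∀ d c, d < c → c < k → F d c x = 0
  singk : ∀ d, d < i → F d k x = 0
  F2 : ∀ a, i < a → a < k → ∑ b ∈ Finset.range a, F a b (F b k x) = ((K i : ℂ) - K a) • F a k x
  F3 : ∑ a ∈ Finset.range k, F k a (F a k x) = κ • x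

lemma SS.step {β : ℂ} {L : ℕ → ℤ} (hE : ∀ z, HW n (E z) ξ (fun c => β + L c + c + z))
    {i k : ℕ} {K : ℕ → ℤ} {κ : ℂ} {x : V} (S : SS n F i k β K κ x)
    (hK : ∀ c, i < c → c < k → K c < K i - 1) (hκ : κ + (K i - 1 - K k) ≠ 0) :
    ∃ x', SS n F i k β (fun c => K c - (if c = i then 1 else 0) + (if c = k then 1 else 0))
      (κ + (K i - 1 - K k)) x' ∧
      LinkO n E F ξ x x' ((Finset.Ioc i k).filter fun c => L c - K i + 1 = 0).card
        ((Finset.Ico i k).filter fun c => L c - K i = 0).card := by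
  have hik := S.hik
  set r : ℕ → ℂ := fun c => if c = k then 1 else ((K i - 1 - K c : ℤ) : ℂ) with hr
  have rc : ∀ c, c < k → r c = ((K i - 1 - K c : ℤ) : ℂ) := fun c hc => by
    simp only [hr]; rw [if_neg (by omega)]
  have rk : r k = 1 := by simp [hr]
  have r0 : ∀ c, i < c → c ≤ k → r c ≠ 0 := by
    intro c h1 h2
    rcases h2.lt_or_eq with h | h
    · rw [rc c h]; have := hK c h1 h; exact_mod_cast (by omega : K i - 1 - K c ≠ 0)
    · rw [h, rk]; exact one_ne_zero
  set w := wfun F i x r with hw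
  have W : WSys n F i k x (fun c => β + K c + c) r w := by
    refine ⟨S.rel, hik, S.hkn, S.wt, S.sing, S.singk, r0, ?_, rk, ?_, ?_, ?_⟩
    · intro c h1 h2
      rw [rc c h2]; push_cast; ring
    · intro a ha; rw [hw, wfun, if_pos ha]
    · rw [hw, wfun, if_neg (by omega), if_pos rfl]
    · intro c h1 h2
      conv_lhs => rw [hw, wfun, if_neg (by omega), if_neg (by omega)]
      rw [smul_smul, mul_inv_cancel₀ (r0 c h1 h2), one_smul, Finset.sum_range]
  have T : ∀ c, c < k → F c k (w k) = (κ + (K i - 1 - K k)) • w c := by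
    intro c hc
    rw [W.top ?_ S.F3 hc]
    · congr 1; ring
    · intro a h1 h2
      rw [S.F2 a h1 h2, rc a h2]; congr 1; push_cast; ring
  refine ⟨w k, ⟨S.rel, hik, S.hkn, ?_, ?_, ?_, ?_, ?_⟩, ?_⟩
  · intro c hc
    rw [W.w3 k le_rfl c hc]; congr 1; push_cast; ring
  · intro d c hdc hc
    rw [W.w1 le_rfl hdc hc, if_neg (by omega)]
  · exact W.w5 k le_rfl
  · intro a h1 h2
    rw [T a h2, Finset.sum_congr rfl (g := fun b => (κ + (K i - 1 - K k)) • F a b (w b)),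
      ← Finset.smul_sum, ← W.wc a h1 h2.le, rc a h2]
    · have n1 : ¬ a = i := by omega
      have n2 : ¬ a = k := by omega
      have n3 : ¬ i = k := by omega
      simp only [n1, n2, n3, if_true, if_false]
      rw [smul_comm]; congr 1; push_cast; ring
    · intro b hb
      have := Finset.mem_range.1 hb
      rw [T b (by omega), map_smul]
  · rw [Finset.sum_congr rfl (g := fun b => (κ + (K i - 1 - K k)) • F k b (w b)),
      ← Finset.smul_sum, ← W.wc k hik le_rfl, rk, one_smul]
    intro b hb
    rw [T b (Finset.mem_range.1 hb), map_smul]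
  · refine ⟨fun z => ∏ c ∈ Finset.Ioc i k, (z + ((L c - K i + 1 : ℤ) : ℂ)),
      fun z => ((κ + (K i - 1 - K k)) * ∏ c ∈ Finset.Ioo i k, (1 + (r c)⁻¹)) *
        ∏ c ∈ Finset.Ico i k, (z + ((L c - K i : ℤ) : ℂ)), HasOrd.prod _ _, ?_, ?_⟩
    · have h : (κ + (K i - 1 - K k)) * ∏ c ∈ Finset.Ioo i k, (1 + (r c)⁻¹) ≠ 0 := by
        refine mul_ne_zero hκ (Finset.prod_ne_zero_iff.2 fun c hc => ?_)
        rw [Finset.mem_Ioo] at hc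
        have h1 := r0 c hc.1 hc.2.le
        intro h2
        have h3 : r c + 1 = 0 := by
          have := congrArg (fun t => r c * t) h2
          simp only [mul_add, mul_inv_cancel₀ h1, mul_zero, mul_one] at this
          exact this
        rw [rc c hc.2] at h3
        have h4 : K i - 1 - K c + 1 = 0 := by exact_mod_cast h3
        have := hK c hc.1 hc.2
        omega
      simpa using (HasOrd.const h).mul (HasOrd.prod (Finset.Ico i k) fun c => L c - K i)
    · intro z
      obtain ⟨X, X', h1, h2, h3⟩ := xop (hE z) W
      refine ⟨X, X', h1, ?_, ?_⟩
      · rw [h2]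
        congr 1
        refine Finset.prod_congr rfl fun c _ => ?_
        push_cast; ring
      · rw [h3 (w k) ⟨?_, ?_, ?_⟩, T i hik, W.wi, TensorProduct.tmul_smul, smul_smul]
        · congr 1
          dsimp only
          rw [mul_comm, ← mul_assoc]
          congr 1
          · refine Finset.prod_congr rfl fun c _ => ?_
            push_cast; ring
        · intro d c hdc hc
          rw [W.w1 le_rfl hdc hc, if_neg (by omega)]
        · exact W.w5 k le_rfl
        · intro c h1 h2
          rw [W.w3 k le_rfl c (by have := S.hkn; omega)]
          have n1 : ¬ c = i := by omega
          have n2 : ¬ c = k := by omega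
          simp [n1, n2]

lemma SS.steps {β : ℂ} {L : ℕ → ℤ} (hE : ∀ z, HW n (E z) ξ (fun c => β + L c + c + z))
    {i k : ℕ} {K : ℕ → ℤ} {x : V} (S : SS n F i k β K 0 x) (s : ℕ)
    (hK : ∀ c, i < c → c ≤ k → K c < K i - s) :
    ∃ y, SS n F i k β (fun c => K c - (if c = i then (s : ℤ) else 0) + (if c = k then (s : ℤ) else 0))
      (s * (K i - K k - s)) y ∧
      LinkO n E F ξ x y ((Finset.Ioc i k).filter fun c => K i - s ≤ L c ∧ L c < K i).card
        ((Finset.Ico i k).filter fun c => K i - s < L c ∧ L c ≤ K i).card := by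
  have hik := S.hik
  have n1 : ¬ i = k := by omega
  have n2 : ¬ k = i := by omega
  induction s with
  | zero =>
    refine ⟨x, by simpa using S, ?_⟩
    rw [Finset.card_eq_zero.2 (Finset.filter_eq_empty_iff.2 fun c _ => by push_cast; omega),
      Finset.card_eq_zero.2 (Finset.filter_eq_empty_iff.2 fun c _ => by push_cast; omega)]
    exact .refl x
  | succ s ih =>
    obtain ⟨y, S', h⟩ := ih fun c h1 h2 => by have := hK c h1 h2; push_cast at this; omega
    have hk := hK k hik le_rfl
    have ek : ((s : ℂ) * (K i - K k - s)) + (((K i - (if i = i then (s : ℤ) else 0) + (if i = k then (s : ℤ) else 0) : ℤ) : ℂ) - 1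
      - ((K k - (if k = i then (s : ℤ) else 0) + (if k = k then (s : ℤ) else 0) : ℤ) : ℂ)) =
      ((s + 1 : ℕ) : ℂ) * (K i - K k - ((s + 1 : ℕ) : ℂ)) := by
      rw [if_pos rfl, if_neg n1, if_neg n2, if_pos rfl]; push_cast; ring
    obtain ⟨y', S'', h'⟩ := S'.step hE (fun c h1 h2 => by
      have := hK c h1 h2.le
      rw [if_pos rfl, if_neg n1, if_neg (by omega), if_neg (by omega)]; push_cast at this; omega) (by
      rw [ek]
      refine mul_ne_zero (by exact_mod_cast Nat.succ_ne_zero s) ?_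
      have : K i - K k - ((s + 1 : ℕ) : ℤ) ≠ 0 := by omega
      exact_mod_cast this)
    rw [ek] at S''
    refine ⟨y', ?_, ?_⟩
    · convert S'' using 2
      split_ifs <;> push_cast <;> omega
    · have := h.trans h'
      convert this using 1
      · rw [← Finset.card_union_of_disjoint]
        · congr 1
          ext c
          simp only [Finset.mem_union, Finset.mem_filter, if_true, n1, if_false]
          push_cast
          constructor
          · intro h; by_cases hc : K i - s ≤ L c
            · left; exact ⟨h.1, hc, h.2.2⟩
            · right; refine ⟨h.1, ?_⟩; omega
          · rintro (h | h)
            · refine ⟨h.1, ?_⟩; omega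
            · refine ⟨h.1, ?_⟩; omega
        · rw [Finset.disjoint_filter]
          intro c _ h
          simp only [if_true, n1, if_false]
          omega
      · rw [← Finset.card_union_of_disjoint]
        · congr 1
          ext c
          simp only [Finset.mem_union, Finset.mem_filter, if_true, n1, if_false]
          push_cast
          constructor
          · intro h; by_cases hc : K i - s < L c
            · left; exact ⟨h.1, hc, h.2.2⟩
            · right; refine ⟨h.1, ?_⟩; omega
          · rintro (h | h)
            · refine ⟨h.1, ?_⟩; omega
            · refine ⟨h.1, ?_⟩; omega
        · rw [Finset.disjoint_filter]
          intro c _ h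
          simp only [if_true, n1, if_false]
          omega

lemma chain {β : ℂ} {L M : ℕ → ℤ} (hE : ∀ z, HW n (E z) ξ (fun c => β + L c + c + z))
    (hF : GLRel n F)
    (hL : ∀ a b, a < b → b < n → L b < L a) (hM : ∀ a b, a < b → b < n → M b < M a)
    {i0 j0 : ℕ} (hj0 : j0 < n) (hi0 : M i0 < L i0) (hne : ∀ s, i0 ≤ s → s ≤ j0 → L s ≠ M i0)
    (η : V) : ∀ (i k : ℕ) (K : ℕ → ℤ) (x : V) (p : ℕ), i0 ≤ i → i < k → k ≤ j0 →
    (∀ c, c < n → F c c x = (β + K c + c) • x) → (∀ d c, d < c → c ≤ k → F d c x = 0) →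
    (∀ c, c ≤ i → K c = M c) → (∀ c, i < c → c ≤ k → K c < L k) → L k < M i →
    LinkO n E F ξ η x p p → ∃ w q, LinkO n E F ξ η w (q + 1) q := by
  intro i
  induction i using Nat.strong_induction_on with
  | _ i IH =>
  intro k K x p hi hik hk hwt hsing hKM hKL hLM hlink
  have Ki : K i = M i := hKM i le_rfl
  have S0 : SS n F i k β K 0 x := by
    refine ⟨hF, hik, by omega, hwt, fun d c h1 h2 => hsing d c h1 h2.le,
      fun d hd => hsing d k (by omega) le_rfl, ?_, ?_⟩
    · intro a h1 h2
      rw [hsing a k h2 le_rfl, smul_zero]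
      refine Finset.sum_eq_zero fun b hb => ?_
      have := Finset.mem_range.1 hb
      rw [hsing b k (by omega) le_rfl, map_zero]
    · rw [zero_smul]
      refine Finset.sum_eq_zero fun b hb => ?_
      have := Finset.mem_range.1 hb
      rw [hsing b k (by omega) le_rfl, map_zero]
  obtain ⟨s, hs⟩ := Int.eq_ofNat_of_zero_le (show 0 ≤ M i - L k by omega)
  have hs' : K i - s = L k := by omega
  obtain ⟨y, Sy, hy⟩ := S0.steps hE s fun c h1 h2 => by rw [hs']; exact hKL c h1 h2
  rw [hs', Ki] at hy
  set G := (Finset.Ioo i k).filter fun c => L c < M i with hG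
  have cP : ((Finset.Ioc i k).filter fun c => L k ≤ L c ∧ L c < M i).card = G.card + 1 := by
    rw [← Finset.card_insert_of_notMem (a := k) (by simp [hG])]
    congr 1
    ext c
    simp only [Finset.mem_insert, hG, Finset.mem_filter, Finset.mem_Ioc, Finset.mem_Ioo]
    constructor
    · intro h
      rcases h.1.2.lt_or_eq with h1 | h1
      · right; exact ⟨⟨h.1.1, h1⟩, h.2.2⟩
      · left; exact h1
    · rintro (h | h)
      · subst h; exact ⟨⟨hik, le_rfl⟩, le_rfl, hLM⟩
      · have := hL c k h.1.2 (by omega)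
        exact ⟨⟨h.1.1, h.1.2.le⟩, this.le, h.2⟩
  rw [cP] at hy
  have next : ∀ r, i ≤ r → r < k → L r ≤ M i → (r = i ∨ L r = M i) →
      ∃ w q, LinkO n E F ξ η w (q + 1) q := by
    intro r h1 h2 h3 h4
    have hii : i0 < i := by
      rcases hi.lt_or_eq with h | h
      · exact h
      · exfalso
        subst h
        rcases h4 with h4 | h4
        · subst h4; omega
        · exact hne r h1 (by omega) h4
    have cQ : ((Finset.Ico i k).filter fun c => L k < L c ∧ L c ≤ M i).card = G.card + 1 := by
      have hrG : r ∉ G := by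
        simp only [hG, Finset.mem_filter, Finset.mem_Ioo]
        rintro ⟨⟨h5, h6⟩, h7⟩
        rcases h4 with h4 | h4 <;> omega
      rw [← Finset.card_insert_of_notMem hrG]
      congr 1
      ext c
      simp only [Finset.mem_insert, hG, Finset.mem_filter, Finset.mem_Ico, Finset.mem_Ioo]
      constructor
      · intro h
        by_cases hcr : c = r
        · left; exact hcr
        · right
          rcases h4 with h4 | h4
          · have := hL i c (by omega) (by omega)
            subst h4
            refine ⟨⟨by omega, h.1.2⟩, by omega⟩
          · rcases lt_or_gt_of_ne hcr with h5 | h5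
            · have := hL c r h5 (by omega); omega
            · have := hL r c h5 (by omega)
              exact ⟨⟨by omega, h.1.2⟩, by omega⟩
      · rintro (h | h)
        · subst h; exact ⟨⟨h1, h2⟩, hL c k h2 (by omega), h3⟩
        · have := hL c k h.1.2 (by omega)
          exact ⟨⟨h.1.1.le, h.1.2⟩, this, h.2.le⟩
    rw [cQ] at hy
    have hrk := hL r k h2 (by omega)
    refine IH (i - 1) (by omega) r _ y _ (by omega) (by omega) (by omega) Sy.wt
      (fun d c h5 h6 => Sy.sing d c h5 (by omega)) ?_ ?_ ?_ (hlink.trans hy)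
    · intro c hc
      rw [if_neg (by omega), if_neg (by omega), hKM c (by omega)]; ring
    · intro c h5 h6
      by_cases hci : c = i
      · subst hci
        rw [if_pos rfl, if_neg (by omega)]; omega
      · rw [if_neg hci, if_neg (by omega)]
        have := hKL c (by omega) (by omega)
        omega
    · have := hM (i - 1) i (by omega) (by omega)
      omega
  by_cases h1 : L i ≤ M i
  · exact next i le_rfl hik h1 (Or.inl rfl)
  by_cases h2 : ∃ r, i ≤ r ∧ r < k ∧ L r = M i
  · obtain ⟨r, h3, h4, h5⟩ := h2
    exact next r h3 h4 h5.le (Or.inr h5)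
  push Not at h2
  have cQ : ((Finset.Ico i k).filter fun c => L k < L c ∧ L c ≤ M i).card = G.card := by
    congr 1
    ext c
    simp only [hG, Finset.mem_filter, Finset.mem_Ico, Finset.mem_Ioo]
    constructor
    · intro h
      have h3 := h2 c h.1.1 h.1.2
      refine ⟨⟨?_, h.1.2⟩, by omega⟩
      rcases h.1.1.lt_or_eq with h4 | h4
      · exact h4
      · subst h4; omega
    · intro h
      have := hL c k h.1.2 (by omega)
      exact ⟨⟨h.1.1.le, h.1.2⟩, this, h.2.le⟩
  rw [cQ] at hy
  exact ⟨y, p + G.card, hlink.trans hy⟩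

/-- The full chain, starting from the highest vector. -/
lemma chain_start {β : ℂ} {L M : ℕ → ℤ} (hE : ∀ z, HW n (E z) ξ (fun c => β + L c + c + z))
    {η : V} (hF : HW n F η (fun c => β + M c + c))
    (hL : ∀ a b, a < b → b < n → L b < L a) (hM : ∀ a b, a < b → b < n → M b < M a)
    {i0 j0 : ℕ} (hij : i0 < j0) (hj0 : j0 < n) (h1 : M j0 < L j0) (h2 : L j0 < M i0)
    (h3 : M i0 < L i0) (hne : ∀ s, i0 ≤ s → s ≤ j0 → L s ≠ M i0)
    (hne' : ∀ s, i0 ≤ s → s ≤ j0 → M s ≠ L j0) :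
    ∃ w q, LinkO n E F ξ η w (q + 1) q := by
  set i := Nat.findGreatest (fun c => L j0 < M c) j0 with hi
  have hi1 : L j0 < M i := Nat.findGreatest_spec (P := fun c => L j0 < M c) hij.le h2
  have hi2 : i0 ≤ i := Nat.le_findGreatest hij.le h2
  have hi3 : i ≤ j0 := Nat.findGreatest_le j0
  have hi4 : i < j0 := by
    rcases hi3.lt_or_eq with h | h
    · exact h
    · rw [h] at hi1; omega
  refine chain hE hF.rel hL hM hj0 h3 hne η i j0 M η 0 hi2 hi4 le_rfl hF.diag
    (fun d c h h' => hF.up d c h (by omega)) (fun _ _ => rfl) ?_ hi1 (.refl η)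
  intro c hc1 hc2
  have := Nat.findGreatest_is_greatest hc1 hc2
  have := hne' c (by omega) hc2
  omega

end Chain

section Contra

variable {W : Type} [AddCommGroup W] [Module ℂ W]

lemma Tr.symm {n : ℕ} {T1 T2 : ℕ → ℕ → Module.End ℂ W} {X X' : Module.End ℂ W}
    (h : Tr n T1 T2 X X') : Tr n T1 T2 X' X := by
  induction h with
  | gen1 i j hi hj => exact .gen1 j i hj hi
  | gen2 i j hi hj => exact .gen2 j i hj hi
  | one => exact .one
  | zero => exact .zero
  | add _ _ h1 h2 => exact .add h1 h2
  | smul c _ h => exact .smul c h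
  | mul _ _ h1 h2 => exact .mul h2 h1

/-- Weakly continuous families of operators. -/
def ContE (X : ℂ → Module.End ℂ W) : Prop :=
  ∀ (v : W) (ψ : W →ₗ[ℂ] ℂ), Continuous fun z => ψ (X z v)

lemma ContE.const (X : Module.End ℂ W) : ContE fun _ => X := fun _ _ => continuous_const

lemma ContE.add {X Y : ℂ → Module.End ℂ W} (hX : ContE X) (hY : ContE Y) :
    ContE fun z => X z + Y z := fun v ψ => by
  simp only [LinearMap.add_apply, map_add]
  exact (hX v ψ).add (hY v ψ)

lemma ContE.smul (c : ℂ) {X : ℂ → Module.End ℂ W} (hX : ContE X) :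
    ContE fun z => c • X z := fun v ψ => by
  simp only [LinearMap.smul_apply, map_smul]
  exact (hX v ψ).const_smul c

lemma ContE.mul [FiniteDimensional ℂ W] {X Y : ℂ → Module.End ℂ W} (hX : ContE X) (hY : ContE Y) :
    ContE fun z => X z * Y z := fun v ψ => by
  let b := Module.finBasis ℂ W
  have : ∀ z, ψ ((X z * Y z) v) = ∑ i, b.coord i (Y z v) * ψ (X z (b i)) := by
    intro z
    conv_lhs => rw [Module.End.mul_apply, ← b.sum_repr (Y z v), map_sum, map_sum]
    refine Finset.sum_congr rfl fun i _ => ?_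
    rw [map_smul, map_smul, smul_eq_mul, Module.Basis.coord_apply]
  simp only [this]
  exact continuous_finsetSum _ fun i _ => (hY v _).mul (hX _ _)

lemma no_link_abs [FiniteDimensional ℂ W] {n : ℕ} {T1 T2 : ℂ → ℕ → ℕ → Module.End ℂ W}
    (hc1 : ∀ i j, ContE fun z => T1 z i j) (hc2 : ∀ i j, ContE fun z => T2 z i j)
    (hY : ∀ z, YRel n (T1 z) (T2 z)) (ζ : W) (φ : W →ₗ[ℂ] ℂ) (hφ : φ ζ = 1)
    (h1 h2 : ℂ → ℕ → ℂ)
    (hup1 : ∀ z i j, i < j → j < n → T1 z i j ζ = 0)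
    (hup2 : ∀ z i j, i < j → j < n → T2 z i j ζ = 0)
    (hd1 : ∀ z i, i < n → T1 z i i ζ = h1 z i • ζ) (hd2 : ∀ z i, i < n → T2 z i i ζ = h2 z i • ζ)
    (pup1 : ∀ z i j, j < i → i < n → ∀ v, φ (T1 z i j v) = 0)
    (pup2 : ∀ z i j, j < i → i < n → ∀ v, φ (T2 z i j v) = 0)
    (pd1 : ∀ z i, i < n → ∀ v, φ (T1 z i i v) = h1 z i * φ v)
    (pd2 : ∀ z i, i < n → ∀ v, φ (T2 z i i v) = h2 z i * φ v)
    (hirr : ∀ N : Submodule ℂ W, (∀ i j, i < n → j < n → ∀ v ∈ N, T1 0 i j v ∈ N) →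
      (∀ i j, i < n → j < n → ∀ v ∈ N, T2 0 i j v ∈ N) → N = ⊥ ∨ N = ⊤)
    (v : W) (P Q : ℂ → ℂ) (q : ℕ) (hP : HasOrd P (q + 1)) (hQ : HasOrd Q q)
    (hXX : ∀ z, ∃ X X' : Module.End ℂ W, Tr n (T1 z) (T2 z) X X' ∧ X ζ = P z • v ∧
      X' v = Q z • ζ) : False := by
  let N : Submodule ℂ W :=
    { carrier := {u | ∃ Y Y' : ℂ → Module.End ℂ W, ContE Y ∧ ContE Y' ∧
        (∀ z, Tr n (T1 z) (T2 z) (Y z) (Y' z)) ∧ Y 0 ζ = u}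
      zero_mem' := ⟨fun _ => 0, fun _ => 0, .const 0, .const 0, fun _ => .zero, by simp⟩
      add_mem' := by
        rintro a b ⟨Y, Y', c1, c2, c3, c4⟩ ⟨Z, Z', d1, d2, d3, d4⟩
        exact ⟨fun z => Y z + Z z, fun z => Y' z + Z' z, c1.add d1, c2.add d2,
          fun z => .add (c3 z) (d3 z), by simp [c4, d4]⟩
      smul_mem' := by
        rintro c a ⟨Y, Y', c1, c2, c3, c4⟩
        exact ⟨fun z => c • Y z, fun z => c • Y' z, c1.smul c, c2.smul c,
          fun z => .smul c (c3 z), by simp [c4]⟩ }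
  have hN : N = ⊤ := by
    have hz : ζ ∈ N := ⟨fun _ => 1, fun _ => 1, .const 1, .const 1, fun _ => .one, by simp⟩
    refine (hirr N ?_ ?_).resolve_left ?_
    · rintro i j hi hj a ⟨Y, Y', c1, c2, c3, c4⟩
      exact ⟨fun z => T1 z i j * Y z, fun z => Y' z * T1 z j i, (hc1 i j).mul c1, c2.mul (hc1 j i),
        fun z => .mul (.gen1 i j hi hj) (c3 z), by simp [c4]⟩
    · rintro i j hi hj a ⟨Y, Y', c1, c2, c3, c4⟩
      exact ⟨fun z => T2 z i j * Y z, fun z => Y' z * T2 z j i, (hc2 i j).mul c1, c2.mul (hc2 j i),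
        fun z => .mul (.gen2 i j hi hj) (c3 z), by simp [c4]⟩
    · intro h
      rw [h, Submodule.mem_bot] at hz
      rw [hz, map_zero] at hφ
      exact zero_ne_one hφ
  let b := Module.finBasis ℂ W
  have hb : ∀ j, ∃ Y Y' : ℂ → Module.End ℂ W, ContE Y ∧ ContE Y' ∧
        (∀ z, Tr n (T1 z) (T2 z) (Y z) (Y' z)) ∧ Y 0 ζ = b j := fun j => by
    have : b j ∈ N := by rw [hN]; trivial
    exact this
  choose Y Y' cY cY' tY hY0 using hb
  let M : ℂ → Matrix (Fin (Module.finrank ℂ W)) (Fin (Module.finrank ℂ W)) ℂ := fun z i j =>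
    b.coord i (Y j z ζ)
  have hM : Continuous M := by
    refine continuous_matrix fun i j => cY j ζ (b.coord i)
  have hM0 : M 0 = 1 := by
    ext i j
    simp only [M, hY0, Matrix.one_apply]
    simp [Finsupp.single_apply, eq_comm]
  let a : ℂ → Fin (Module.finrank ℂ W) → ℂ := fun z => (M z).adjugate.mulVec (fun i => b.coord i v)
  have ha : ∀ j, Continuous fun z => a z j := by
    have : Continuous a := Continuous.matrix_mulVec hM.matrix_adjugate continuous_const
    exact fun j => (continuous_apply j).comp this
  have hdet : Continuous fun z => (M z).det := hM.matrix_det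
  have key : ∀ z, (M z).det • v = ∑ j, a z j • Y j z ζ := by
    intro z
    apply b.repr.injective
    ext i
    have e1 : (M z).mulVec (a z) = (M z).det • fun i => b.coord i v := by
      simp only [a]
      rw [Matrix.mulVec_mulVec, Matrix.mul_adjugate, Matrix.smul_mulVec, Matrix.one_mulVec]
    have e2 := congrFun e1 i
    simp only [Matrix.mulVec, dotProduct, M, Pi.smul_apply, smul_eq_mul, Module.Basis.coord_apply] at e2
    simp only [map_smul, map_sum, Finsupp.smul_apply, smul_eq_mul, Finsupp.coe_finsetSum,
      Finset.sum_apply]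
    refine Eq.trans e2.symm ?_
    exact Finset.sum_congr rfl fun j _ => mul_comm _ _
  have main : ∀ z, (M z).det * Q z = P z * ∑ j, a z j * φ (Y' j z v) := by
    intro z
    obtain ⟨X, X', hX, e1, e2⟩ := hXX z
    have e3 : φ (X' ((M z).det • v)) = (M z).det * Q z := by
      rw [map_smul, e2, map_smul, map_smul, hφ]; simp
    rw [← e3, key z]
    simp only [map_sum, map_smul, smul_eq_mul, Finset.mul_sum]
    refine Finset.sum_congr rfl fun j _ => ?_
    have := Tr.symm_form (hY z) ζ φ (h1 z) (h2 z) (hup1 z) (hup2 z) (hd1 z) (hd2 z) (pup1 z)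
      (pup2 z) (pd1 z) (pd2 z) (Tr.mul hX.symm (tY j z))
    rw [Module.End.mul_apply, Module.End.mul_apply, e1, map_smul, map_smul, smul_eq_mul] at this
    rw [this]; ring
  obtain ⟨P1, cP, P0, hP⟩ := hP
  obtain ⟨Q1, cQ, Q0, hQ⟩ := hQ
  have e : (fun z => (M z).det * Q1 z) = fun z => z * P1 z * ∑ j, a z j * φ (Y' j z v) := by
    refine Continuous.ext_on (dense_compl_singleton (0 : ℂ)) (hdet.mul cQ)
      ((continuous_id.mul cP).mul (continuous_finsetSum _ fun j _ => (ha j).mul (cY' j v φ))) ?_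
    intro z hz
    have hz' : z ^ q ≠ 0 := pow_ne_zero _ hz
    have := main z
    rw [hP, hQ] at this
    refine mul_left_cancel₀ hz' ?_
    simp only
    linear_combination this
  have e0 := congrFun e 0
  simp only [hM0, Matrix.det_one, one_mul, zero_mul] at e0
  exact Q0 e0

end Contra

section TypeOne

variable {n : ℕ} {lam mu : Fin n → ℂ}

/-- The matrix units indexed by natural numbers. -/
noncomputable def GLRep.e (A : GLRep n lam) (i j : ℕ) : Module.End ℂ A.V :=
  if h : i < n ∧ j < n then A.E ⟨i, h.1⟩ ⟨j, h.2⟩ else 0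

lemma GLRep.e_eq (A : GLRep n lam) {i j : ℕ} (hi : i < n) (hj : j < n) :
    A.e i j = A.E ⟨i, hi⟩ ⟨j, hj⟩ := by simp [GLRep.e, hi, hj]

lemma GLRep.e_rel (A : GLRep n lam) : GLRel n A.e := by
  intro i j k l hi hj hk hl
  have := A.commRel ⟨i, hi⟩ ⟨j, hj⟩ ⟨k, hk⟩ ⟨l, hl⟩
  simp only [A.e_eq hi hj, A.e_eq hk hl, A.e_eq hi hl, A.e_eq hk hj]
  simp only [Fin.mk.injEq] at this
  rw [← sub_eq_iff_eq_add']
  exact this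

/-- The matrix units of the shifted representation. -/
noncomputable def shiftE {U : Type} [AddCommGroup U] [Module ℂ U] (E : ℕ → ℕ → Module.End ℂ U) (z : ℂ)
    (i j : ℕ) : Module.End ℂ U := E i j + if i = j then z • 1 else 0

lemma shiftE_rel {U : Type} [AddCommGroup U] [Module ℂ U] {E : ℕ → ℕ → Module.End ℂ U}
    (hE : GLRel n E) (z : ℂ) : GLRel n (shiftE E z) := by
  intro i j k l hi hj hk hl
  have := hE i j k l hi hj hk hl
  have comm : ∀ (p q : Prop) [Decidable p] [Decidable q] (X Y : Module.End ℂ U),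
      (X + if p then z • 1 else 0) * (Y + if q then z • 1 else 0) =
      (Y + if q then z • 1 else 0) * (X + if p then z • 1 else 0) + (X * Y - Y * X) := by
    intro p q _ _ X Y
    split_ifs <;> simp [add_mul, mul_add] <;> abel
  simp only [shiftE]
  rw [comm, this]
  congr 1
  by_cases h1 : j = k
  · subst h1
    by_cases h2 : l = i
    · subst h2; simp
    · have : ¬ i = l := by omega
      simp [h2, this]
  · by_cases h2 : l = i
    · subst h2
      have : ¬ k = j := by omega
      simp [h1, this]
    · simp [h1, h2]

lemma type_one (A : GLRep n lam) (B : GLRep n mu) (hirr : YangianIrred2 A B) (β : ℂ) (L M : ℕ → ℤ)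
    (hl : ∀ c : Fin n, lam c = β + L c + (c : ℕ)) (hm : ∀ c : Fin n, mu c = β + M c + (c : ℕ))
    (hL : ∀ a b, a < b → b < n → L b < L a) (hM : ∀ a b, a < b → b < n → M b < M a)
    {i0 j0 : ℕ} (hij : i0 < j0) (hj0 : j0 < n) (h1 : M j0 < L j0) (h2 : L j0 < M i0)
    (h3 : M i0 < L i0) (hne : ∀ s, i0 ≤ s → s ≤ j0 → L s ≠ M i0)
    (hne' : ∀ s, i0 ≤ s → s ≤ j0 → M s ≠ L j0) : False := by
  have HE : ∀ z, HW n (shiftE A.e z) A.hv (fun c => β + L c + c + z) := by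
    intro z
    refine ⟨shiftE_rel A.e_rel z, ?_, ?_⟩
    · intro a b hab hb
      have : ¬ a = b := by omega
      simp only [shiftE, this, if_false, add_zero]
      rw [A.e_eq (by omega) hb]
      exact A.hv_upper _ _ hab
    · intro a ha
      simp only [shiftE, if_true, LinearMap.add_apply, LinearMap.smul_apply, Module.End.one_apply]
      rw [A.e_eq ha ha, A.hv_diag, hl]
      module
  have HF : HW n B.e B.hv (fun c => β + M c + c) := by
    refine ⟨B.e_rel, ?_, ?_⟩
    · intro a b hab hb
      rw [B.e_eq (by omega) hb]
      exact B.hv_upper _ _ hab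
    · intro a ha
      rw [B.e_eq ha ha, B.hv_diag, hm]
  obtain ⟨w, q, P, Q, hP, hQ, hlink⟩ := chain_start HE HF hL hM hij hj0 h1 h2 h3 hne hne'
  obtain ⟨f, f1, f2, f3⟩ := A.exists_low
  obtain ⟨g, g1, g2, g3⟩ := B.exists_low
  have fl : ∀ z i j, j < i → i < n → ∀ v, f (shiftE A.e z i j v) = 0 := by
    intro z i j hji hi v
    have : ¬ i = j := by omega
    simp only [shiftE, this, if_false, add_zero]
    rw [A.e_eq hi (by omega)]
    exact f2 _ _ hji v
  have fd : ∀ z i, i < n → ∀ v, f (shiftE A.e z i i v) = (β + L i + i + z) * f v := by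
    intro z i hi v
    simp only [shiftE, if_true, LinearMap.add_apply, LinearMap.smul_apply, Module.End.one_apply,
      map_add, map_smul]
    rw [A.e_eq hi hi, f3, hl, smul_eq_mul]; ring
  have gl : ∀ i j, j < i → i < n → ∀ v, g (B.e i j v) = 0 := by
    intro i j hji hi v
    rw [B.e_eq hi (by omega)]
    exact g2 _ _ hji v
  have gd : ∀ i, i < n → ∀ v, g (B.e i i v) = (β + M i + i) * g v := by
    intro i hi v
    rw [B.e_eq hi hi, g3, hm]
  let φ : A.V ⊗[ℂ] B.V →ₗ[ℂ] ℂ := LinearMap.mul' ℂ ℂ ∘ₗ TensorProduct.map f g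
  have φt : ∀ u v, φ (u ⊗ₜ[ℂ] v) = f u * g v := fun u v => by simp [φ]
  have s0 : shiftE A.e 0 = A.e := by
    funext i j; simp [shiftE]
  have ext : ∀ (X : Module.End ℂ (A.V ⊗[ℂ] B.V)) (c : ℂ), (∀ u v, φ (X (u ⊗ₜ[ℂ] v)) = c * φ (u ⊗ₜ[ℂ] v)) →
      ∀ t, φ (X t) = c * φ t := by
    intro X c h t
    induction t using TensorProduct.induction_on with
    | zero => simp
    | tmul u v => exact h u v
    | add s t hs ht => rw [map_add, map_add, map_add, hs, ht, mul_add]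
  have p2 : ∀ z i j, j ≤ i → i < n → ∀ u v, φ (tau2 n (shiftE A.e z) B.e i j (u ⊗ₜ[ℂ] v)) =
      (β + L i + i + z) * f u * g (B.e i j v) := by
    intro z i j hji hi u v
    rw [tau2_tmul, map_sum, Finset.sum_eq_single i]
    · rw [φt, fd z i hi]
    · intro a ha hai
      have := Finset.mem_range.1 ha
      rw [φt]
      rcases lt_or_gt_of_ne hai with h | h
      · rw [fl z i a h hi, zero_mul]
      · rw [gl a j (by omega) this, mul_zero]
    · intro h; exact absurd (Finset.mem_range.2 hi) h
  refine no_link_abs (n := n) (T1 := fun z => tau1 (shiftE A.e z) B.e)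
    (T2 := fun z => tau2 n (shiftE A.e z) B.e) ?_ ?_ (fun z => tau_yrel (HE z).rel HF.rel)
    (A.hv ⊗ₜ[ℂ] B.hv) φ (by rw [φt, f1, g1, mul_one])
    (fun z i => (β + L i + i + z) + (β + M i + i)) (fun z i => (β + L i + i + z) * (β + M i + i))
    ?_ ?_ ?_ ?_ ?_ ?_ ?_ ?_ ?_ (A.hv ⊗ₜ[ℂ] w) P Q q hP hQ hlink
  · intro i j
    have : (fun z => tau1 (shiftE A.e z) B.e i j) = fun z => tau1 A.e B.e i j +
        z • (if i = j then 1 else 0) := by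
      funext z
      refine TensorProduct.ext' fun u v => ?_
      simp only [LinearMap.add_apply, tau1_tmul, LinearMap.smul_apply, shiftE]
      split_ifs
      · simp [TensorProduct.add_tmul, TensorProduct.smul_tmul']; abel
      · simp
    rw [this]
    refine (ContE.const _).add fun v ψ => ?_
    simp only [LinearMap.smul_apply, map_smul]
    fun_prop
  · intro i j
    have : (fun z => tau2 n (shiftE A.e z) B.e i j) = fun z => tau2 n A.e B.e i j +
        z • (if i < n then TensorProduct.map LinearMap.id (B.e i j) else 0) := by
      funext z
      refine TensorProduct.ext' fun u v => ?_
      simp only [LinearMap.add_apply, tau2_tmul, LinearMap.smul_apply, shiftE,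
        TensorProduct.add_tmul, Finset.sum_add_distrib]
      congr 1
      by_cases hi : i < n
      · rw [Finset.sum_eq_single i]
        · simp [hi, TensorProduct.smul_tmul']
        · intro a _ ha
          have : ¬ i = a := fun h => ha h.symm
          simp [this]
        · intro h; exact absurd (Finset.mem_range.2 hi) h
      · rw [if_neg hi, Finset.sum_eq_zero]
        · simp
        · intro a ha
          have := Finset.mem_range.1 ha
          have : ¬ i = a := by omega
          simp [this]
    rw [this]
    refine (ContE.const _).add fun v ψ => ?_
    simp only [LinearMap.smul_apply, map_smul]
    fun_prop
  · intro z i j hi hj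
    rw [tau1_tmul, (HE z).up i j hi hj, HF.up i j hi hj]; simp
  · intro z i j hi hj
    rw [(HE z).tau2 (by omega), HF.up i j hi hj, Finset.sum_eq_zero]
    · simp
    · intro a ha
      have := Finset.mem_range.1 ha
      rw [HF.up a j (by omega) hj, TensorProduct.tmul_zero]
  · intro z i hi
    rw [tau1_tmul, (HE z).diag i hi, HF.diag i hi, TensorProduct.tmul_smul,
      ← TensorProduct.smul_tmul']
    module
  · intro z i hi
    rw [(HE z).tau2 (by omega), HF.diag i hi, Finset.sum_eq_zero]
    · rw [TensorProduct.tmul_smul]; module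
    · intro a ha
      have := Finset.mem_range.1 ha
      rw [HF.up a i (by omega) hi, TensorProduct.tmul_zero]
  · intro z i j hji hi t
    rw [ext _ 0 ?_ t, zero_mul]
    intro u v
    rw [tau1_tmul, map_add, φt, φt, fl z i j hji hi, gl i j hji hi]; ring
  · intro z i j hji hi t
    rw [ext _ 0 ?_ t, zero_mul]
    intro u v
    rw [p2 z i j hji.le hi, gl i j hji hi]; ring
  · intro z i hi
    refine ext _ _ fun u v => ?_
    rw [tau1_tmul, map_add, φt, φt, φt, fd z i hi, gd i hi]; ring
  · intro z i hi
    refine ext _ _ fun u v => ?_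
    rw [p2 z i i le_rfl hi, φt, gd i hi]; ring
  · intro N hN1 hN2
    simp only [s0] at hN1 hN2
    refine hirr N ?_ ?_
    · intro i j v hv
      have := hN1 i j i.2 j.2 v hv
      rw [tau1, A.e_eq i.2 j.2, B.e_eq i.2 j.2] at this
      exact this
    · intro i j v hv
      have := hN2 i j i.2 j.2 v hv
      rw [tau2, Finset.sum_range] at this
      simp only [A.e_eq i.2 (Fin.is_lt _), B.e_eq (Fin.is_lt _) j.2] at this
      exact this

end TypeOne

section DualRep

lemma dual_irr {ι W : Type} [AddCommGroup W] [Module ℂ W] [FiniteDimensional ℂ W]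
    (T : ι → Module.End ℂ W)
    (h : ∀ U : Submodule ℂ W, (∀ i, ∀ v ∈ U, T i v ∈ U) → U = ⊥ ∨ U = ⊤)
    (N : Submodule ℂ (Module.Dual ℂ W)) (hN : ∀ i, ∀ f ∈ N, (T i).dualMap f ∈ N) :
    N = ⊥ ∨ N = ⊤ := by
  have hN' : N.dualCoannihilator.dualAnnihilator = N :=
    Subspace.dualCoannihilator_dualAnnihilator_eq
  rcases h N.dualCoannihilator (fun i v hv => by
    rw [Submodule.mem_dualCoannihilator] at hv ⊢
    exact fun f hf => hv _ (hN i f hf)) with h1 | h1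
  · right; rw [← hN', h1, Submodule.dualAnnihilator_bot]
  · left; rw [← hN', h1, Submodule.dualAnnihilator_top]

variable {n : ℕ} {lam mu : Fin n → ℂ}

lemma GLRep.exists_dual (A : GLRep n lam) : ∃ f : Module.Dual ℂ A.V, f A.hv = 1 ∧
    (∀ i j : Fin n, j < i → ∀ v, f (A.E i j v) = 0) ∧ ∀ i v, f (A.E i i v) = lam i * f v :=
  A.exists_low

/-- The contragredient representation (twisted by the transposition). -/
noncomputable def GLRep.dual (A : GLRep n lam) : GLRep n lam where
  V := Module.Dual ℂ A.V
  E i j := (A.E j i).dualMap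
  commRel := by
    intro i j k l
    have := A.commRel l k j i
    refine LinearMap.ext fun f => LinearMap.ext fun v => ?_
    have h := congrArg (fun X : A.V →ₗ[ℂ] A.V => f (X v)) this
    simp only [LinearMap.sub_apply, LinearMap.comp_apply, map_sub] at h
    simp only [LinearMap.sub_apply, LinearMap.comp_apply, LinearMap.dualMap_apply]
    rw [h]
    congr 1
    · by_cases h : j = k
      · subst h; simp
      · have : ¬ k = j := fun h' => h h'.symm
        simp [h, this]
    · by_cases h : l = i
      · subst h; simp
      · have : ¬ i = l := fun h' => h h'.symm
        simp [h, this]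
  hv := A.exists_dual.choose
  hv_ne := by
    intro h
    have := A.exists_dual.choose_spec.1
    rw [h] at this
    simp at this
  hv_upper := by
    intro i j hij
    refine LinearMap.ext fun v => ?_
    exact A.exists_dual.choose_spec.2.1 j i hij v
  hv_diag := by
    intro i
    refine LinearMap.ext fun v => ?_
    exact A.exists_dual.choose_spec.2.2 i v
  irreducible := by
    intro U hU
    refine dual_irr (fun p : Fin n × Fin n => (A.E p.1 p.2 : Module.End ℂ A.V)) ?_ U ?_
    · intro U h
      exact A.irreducible U fun i j v hv => h (i, j) v hv
    · intro p f hf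
      exact hU p.2 p.1 f hf

lemma dual_irred2_aux {A : GLRep n lam} {B : GLRep n mu} (h : YangianIrred2 A B)
    (s1 s2 : Fin n → Fin n → Module.End ℂ (Module.Dual ℂ B.V ⊗[ℂ] Module.Dual ℂ A.V))
    (hs1 : ∀ i j, s1 i j = TensorProduct.map (B.E j i).dualMap LinearMap.id +
      TensorProduct.map LinearMap.id (A.E j i).dualMap)
    (hs2 : ∀ i j, s2 i j = ∑ a : Fin n, TensorProduct.map (B.E a i).dualMap (A.E j a).dualMap)
    (N : Submodule ℂ (Module.Dual ℂ B.V ⊗[ℂ] Module.Dual ℂ A.V))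
    (h1 : ∀ i j, ∀ v ∈ N, s1 i j v ∈ N) (h2 : ∀ i j, ∀ v ∈ N, s2 i j v ∈ N) :
    N = ⊥ ∨ N = ⊤ := by
  let e : (Module.Dual ℂ B.V ⊗[ℂ] Module.Dual ℂ A.V) ≃ₗ[ℂ] Module.Dual ℂ (A.V ⊗[ℂ] B.V) :=
    (TensorProduct.comm ℂ _ _).trans (TensorProduct.dualDistribEquiv ℂ A.V B.V)
  have he : ∀ (g : Module.Dual ℂ B.V) (f : Module.Dual ℂ A.V) a b,
      e (g ⊗ₜ[ℂ] f) (a ⊗ₜ[ℂ] b) = f a * g b := by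
    intro g f a b
    simp [e, TensorProduct.dualDistribEquiv, TensorProduct.dualDistribEquivOfBasis]
  have e1 : ∀ i j (x : Module.Dual ℂ B.V ⊗[ℂ] Module.Dual ℂ A.V),
      e (s1 i j x) = (t1 A B j i).dualMap (e x) := by
    intro i j x
    induction x using TensorProduct.induction_on with
    | zero => rw [map_zero, map_zero, map_zero]
    | add s t hs ht => rw [map_add, map_add, map_add, map_add, hs, ht]
    | tmul g f =>
      refine TensorProduct.ext' fun a b => ?_
      have : s1 i j (g ⊗ₜ[ℂ] f) = (g ∘ₗ B.E j i) ⊗ₜ[ℂ] f + g ⊗ₜ[ℂ] (f ∘ₗ A.E j i) := by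
        rw [hs1]; rfl
      rw [this, map_add, LinearMap.add_apply, he, he, LinearMap.dualMap_apply]
      simp only [t1, LinearMap.add_apply, TensorProduct.map_tmul, map_add, LinearMap.id_apply, he,
        LinearMap.comp_apply]
      ring
  have e2 : ∀ i j (x : Module.Dual ℂ B.V ⊗[ℂ] Module.Dual ℂ A.V),
      e (s2 i j x) = (t2 A B j i).dualMap (e x) := by
    intro i j x
    induction x using TensorProduct.induction_on with
    | zero => rw [map_zero, map_zero, map_zero]
    | add s t hs ht => rw [map_add, map_add, map_add, map_add, hs, ht]
    | tmul g f =>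
      refine TensorProduct.ext' fun a b => ?_
      have : s2 i j (g ⊗ₜ[ℂ] f) =
          ∑ c : Fin n, (g ∘ₗ B.E c i) ⊗ₜ[ℂ] (f ∘ₗ A.E j c) := by
        rw [hs2, LinearMap.sum_apply]; rfl
      rw [this, map_sum, LinearMap.sum_apply, LinearMap.dualMap_apply]
      simp only [t2, LinearMap.sum_apply, TensorProduct.map_tmul, map_sum, he,
        LinearMap.comp_apply]
  have key : N.map e.toLinearMap = ⊥ ∨ N.map e.toLinearMap = ⊤ := by
    refine dual_irr (fun p : Bool × Fin n × Fin n => if p.1 then (t1 A B p.2.1 p.2.2 : Module.End ℂ _)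
      else t2 A B p.2.1 p.2.2) ?_ _ ?_
    · intro U hU
      exact h U (fun i j v hv => hU (true, i, j) v hv) (fun i j v hv => by simpa using hU (false, i, j) v hv)
    · rintro ⟨p, i, j⟩ f hf
      obtain ⟨x, hx, rfl⟩ := hf
      cases p
      · exact ⟨_, h2 j i x hx, e2 j i x⟩
      · exact ⟨_, h1 j i x hx, e1 j i x⟩
  rcases key with h | h
  · left
    rw [eq_bot_iff]
    intro x hx
    have : e x ∈ N.map e.toLinearMap := ⟨x, hx, rfl⟩
    rw [h, Submodule.mem_bot] at this
    rw [Submodule.mem_bot]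
    exact e.map_eq_zero_iff.1 this
  · right
    rw [eq_top_iff]
    intro x _
    have : e x ∈ N.map e.toLinearMap := by rw [h]; trivial
    obtain ⟨y, hy, hyx⟩ := this
    rwa [← e.injective hyx]

lemma dual_irred2 {A : GLRep n lam} {B : GLRep n mu} (h : YangianIrred2 A B) :
    YangianIrred2 B.dual A.dual :=
  fun N h1 h2 => dual_irred2_aux h _ _ (fun _ _ => rfl) (fun _ _ => rfl) N h1 h2

end DualRep

lemma int_form {n : ℕ} (hn : 0 < n) {lam : Fin n → ℂ} (h : IsGLHighestWeight n lam) :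
    ∃ D : ℕ → ℤ, (∀ c : Fin n, lshiftC n lam c = lshiftC n lam ⟨0, hn⟩ + D c) ∧
      ∀ a b, a < b → b < n → D b < D a := by
  have h' : ∀ c : ℕ, ∃ N : ℕ, ∀ hc : c + 1 < n,
      lam ⟨c, by omega⟩ - lam ⟨c + 1, hc⟩ = N := by
    intro c
    by_cases hc : c + 1 < n
    · obtain ⟨N, hN⟩ := h ⟨c, by omega⟩ hc
      exact ⟨N, fun _ => hN⟩
    · exact ⟨0, fun h => absurd h hc⟩
  choose N hN using h'
  refine ⟨fun c => -∑ b ∈ Finset.range c, ((N b : ℤ) + 1), ?_, ?_⟩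
  · rintro ⟨c, hc⟩
    induction c with
    | zero => simp
    | succ c ih =>
      have h1 := ih (by omega)
      have h2 := hN c hc
      simp only [lshiftC] at h1 ⊢
      rw [Finset.sum_range_succ]
      push_cast at h1 ⊢
      linear_combination h1 - h2
  · intro a b hab _
    dsimp only
    rw [← Finset.sum_range_add_sum_Ico _ hab.le]
    have : 0 < ∑ k ∈ Finset.Ico a b, ((N k : ℤ) + 1) :=
      Finset.sum_pos (fun k _ => by positivity) ⟨a, by simp [hab]⟩
    omega

lemma mem_bracket_int {n : ℕ} {l : Fin n → ℂ} {β : ℂ} {L : ℕ → ℤ}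
    (hl : ∀ c : Fin n, l c = β + L c) {i j : Fin n} {x : ℂ} {X : ℤ} (hx : x = β + X)
    (h : x ∈ bracketC n l i j) :
    L j ≤ X ∧ X ≤ L i ∧ ∀ s : ℕ, (i : ℕ) ≤ s → s ≤ (j : ℕ) → L s ≠ X := by
  obtain ⟨⟨t, ht⟩, ⟨u, hu⟩, hs⟩ := h
  rw [hx, hl] at ht
  rw [hx, hl] at hu
  have e1 : (X : ℂ) = ((L j + t : ℤ) : ℂ) := by push_cast; linear_combination ht
  have e2 : (L i : ℂ) = ((X + u : ℤ) : ℂ) := by push_cast; linear_combination hu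
  have e1' := Int.cast_injective e1
  have e2' := Int.cast_injective e2
  refine ⟨by omega, by omega, fun s h1 h2 h3 => ?_⟩
  have hsn : s < n := by omega
  refine hs ⟨s, hsn⟩ h1 h2 ?_
  rw [hx, hl, ← h3]

/-- If the `Y(gl_n)`-module `L(λ) ⊗ L(μ)` is irreducible, then
for each pair of indices `i < j` the separation condition holds. -/
theorem sepCond_of_tensorEval_irreducible
    (n : ℕ) (lam mu : Fin n → ℂ)
    (hlam : IsGLHighestWeight n lam) (hmu : IsGLHighestWeight n mu)
    (A : GLRep n lam) (B : GLRep n mu)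
    (hirr : YangianIrred2 A B) :
    ∀ i j : Fin n, i < j → SepCond n lam mu i j := by
  intro i j hij
  by_contra hsep
  have hn : 0 < n := by have := i.2; omega
  obtain ⟨L, hL, hLa⟩ := int_form hn hlam
  obtain ⟨D, hD, hDa⟩ := int_form hn hmu
  set β := lshiftC n lam ⟨0, hn⟩ with hβ
  set γ := lshiftC n mu ⟨0, hn⟩ with hγ
  simp only [SepCond, not_or, not_and_or, not_not] at hsep
  obtain ⟨hs1, hs2⟩ := hsep
  have hint : ∃ u : ℤ, γ = β + u := by
    rcases hs1 with h | h
    · obtain ⟨⟨t, ht⟩, -, -⟩ := h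
      rw [hL, hD] at ht
      exact ⟨L j + t - D j, by push_cast; linear_combination ht⟩
    · obtain ⟨⟨t, ht⟩, -, -⟩ := h
      rw [hL, hD] at ht
      exact ⟨L j + t - D i, by push_cast; linear_combination ht⟩
  obtain ⟨u, hu⟩ := hint
  set M : ℕ → ℤ := fun c => u + D c with hMdef
  have hM : ∀ c : Fin n, lshiftC n mu c = β + M c := by
    intro c
    rw [hD, hu, hMdef]; push_cast; ring
  have hMa : ∀ a b, a < b → b < n → M b < M a := by
    intro a b h1 h2
    have := hDa a b h1 h2
    simp only [hMdef]; omega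
  have hl : ∀ c : Fin n, lam c = β + L c + (c : ℕ) := by
    intro c
    have := hL c
    simp only [lshiftC] at this
    rw [sub_eq_iff_eq_add] at this
    exact this
  have hm : ∀ c : Fin n, mu c = β + M c + (c : ℕ) := by
    intro c
    have := hM c
    simp only [lshiftC] at this
    rw [sub_eq_iff_eq_add] at this
    exact this
  clear_value β γ M
  have hij' : (i : ℕ) < (j : ℕ) := hij
  have lj := hLa i j hij' j.2
  have mj := hMa i j hij' j.2
  rcases hs1 with h1 | h1 <;> rcases hs2 with h2 | h2 <;>
    obtain ⟨a1, a2, a3⟩ := mem_bracket_int hL (hM _) h1 <;>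
    obtain ⟨b1, b2, b3⟩ := mem_bracket_int hM (hL _) h2 <;>
    have a4 := a3 i le_rfl hij'.le <;> have a5 := a3 j hij'.le le_rfl <;>
    have b4 := b3 i le_rfl hij'.le <;> have b5 := b3 j hij'.le le_rfl
  · omega
  · exact type_one B.dual A.dual (dual_irred2 hirr) β M L hm hl hMa hLa hij' j.2
      (by omega) (by omega) (by omega) b3 a3
  · exact type_one A B hirr β L M hl hm hLa hMa hij' j.2
      (by omega) (by omega) (by omega) a3 b3
  · omega
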